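/- For every integer k ≥ 2 and every ε > 0 there exists L > 0 with the following property. For any finitely supported random variable X taking values in G = 𝔽₂ⁿ, there exists a subspace V ⊆ G with H[𝐔_V] ≤ L·H[X] such that, writing X̃ = π_V(X), at least one of the following holds: (i) H[X̃] ≤ ε H[X], or (ii) X̃ is (k, ε)-dissociated, i.e. H[X̃₁ + … + X̃_k] ≥ (k − ε) H[X̃], where X̃₁, …, X̃_k are independent copies of X̃. -/

import Mathlib

open Real Pointwise

noncomputable section

abbrev Fvec (n : ℕ) : Type := Fin n → ZMod 2

/-- Shannon entropy (natural log) of a finitely supported distribution. -/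
def ent {A : Type*} (p : A → ℝ) : ℝ := ∑ᶠ a, Real.negMulLog (p a)

/-- `p` is a (finitely supported) probability distribution. -/
def IsDist {A : Type*} (p : A → ℝ) : Prop := (∀ a, 0 ≤ p a) ∧ ∑ᶠ a, p a = 1

/-- Pushforward of a distribution along a map: the distribution of `f(X)` for `X ∼ p`. -/
def push {A B : Type*} (f : A → B) (p : A → ℝ) : B → ℝ := fun b => ∑ᶠ a ∈ f ⁻¹' {b}, p a

/-- Joint distribution of a pair of independent random variables. -/
def prodDist {A B : Type*} (p : A → ℝ) (q : B → ℝ) : A × B → ℝ := fun z => p z.1 * q z.2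

/-- Distribution of `X + Y` for independent `X ∼ p`, `Y ∼ q`. -/
def conv {A : Type*} [AddGroup A] (p q : A → ℝ) : A → ℝ := fun z => ∑ᶠ x, p x * q (z - x)

/-- The distribution of `X` conditioned on `U = b`, where `r` is the joint distribution of `(X, U)`. -/
def fiber {A B : Type*} (r : A × B → ℝ) (b : B) : A → ℝ := fun a => r (a, b) / push Prod.snd r b

/-- Conditional entropy `H[X | U]` of a joint distribution `r` of `(X, U)`. -/
def condEnt {A B : Type*} (r : A × B → ℝ) : ℝ := ∑ᶠ b, push Prod.snd r b * ent (fiber r b)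

/-- Doubling mass `s[X ; Y]` (of independent copies with distributions `p`, `q`). -/
def sDouble {A : Type*} [AddGroup A] (p q : A → ℝ) : ℝ := ent p + ent q - ent (conv p q)

/-- Conditional doubling mass `s[X | U ; Y | W] = 𝔼_{u ∼ U, w ∼ W} s[X_u ; Y_w]`,
where `r1`, `r2` are the joint distributions of `(X, U)` and `(Y, W)`. -/
def sCond {A U W : Type*} [AddGroup A] (r1 : A × U → ℝ) (r2 : A × W → ℝ) : ℝ :=
  ∑ᶠ u, ∑ᶠ w, push Prod.snd r1 u * push Prod.snd r2 w * sDouble (fiber r1 u) (fiber r2 w)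

/-- Conditional mutual information `I[A : B | S]` of a joint distribution of `(A, B, S)`. -/
def condMI {A B S : Type*} (r : A × B × S → ℝ) : ℝ :=
  ent (push (fun z => (z.1, z.2.2)) r) + ent (push (fun z => z.2) r)
    - ent r - ent (push (fun z => z.2.2) r)

/-- Uniform distribution on a set. -/
def unifOn {A : Type*} (s : Set A) : A → ℝ := s.indicator fun _ => (Nat.card s : ℝ)⁻¹

/-- Entropic Ruzsa distance `d[X ; Y]`. -/
def dRuzsa {A : Type*} [AddGroup A] (p q : A → ℝ) : ℝ := ent (conv p q) - ent p / 2 - ent q / 2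

/-- Joint distribution of `(X, X + Y)` for independent `X ∼ p`, `Y ∼ q`. -/
def jointSum {A : Type*} [AddGroup A] (p q : A → ℝ) : A × A → ℝ :=
  push (fun z : A × A => (z.1, z.1 + z.2)) (prodDist p q)

/-- Joint distribution of `(X, π_V(X))`. -/
def selfProj {n : ℕ} (V : Submodule (ZMod 2) (Fvec n)) (p : Fvec n → ℝ) :
    Fvec n × (Fvec n ⧸ V) → ℝ := push (fun x => (x, V.mkQ x)) p

/-- Joint distribution of independent `(X₁, X₂, Y₁, Y₂)` with `X₁, X₂ ∼ p` and `Y₁, Y₂ ∼ q`. -/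
def quad {A : Type*} (p q : A → ℝ) : A × A × A × A → ℝ :=
  fun z => p z.1 * p z.2.1 * q z.2.2.1 * q z.2.2.2

/-- Distribution of `X₁ + ⋯ + X_k` for independent `Xᵢ ∼ p i`. -/
def indepSum {A : Type*} [AddCommGroup A] (k : ℕ) (p : Fin k → A → ℝ) : A → ℝ :=
  push (fun x : Fin k → A => ∑ i, x i) (fun x => ∏ i, p i (x i))

/-- Statement `A(η, L, c)` from the paper. -/
def StA (η L c : ℝ) : Prop :=
  ∀ (n : ℕ) (p q : Fvec n → ℝ), IsDist p → IsDist q →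
    ent (conv p q) ≤ (1 - η) * (ent p + ent q) →
    ∃ V : Submodule (ZMod 2) (Fvec n),
      ent (unifOn (V : Set (Fvec n))) ≤ L * (ent p + ent q) ∧
      ent (push V.mkQ p) + ent (push V.mkQ q) ≤ (1 - c) * (ent p + ent q)

/-- Statement `B(η, ε, L)` from the paper. -/
def StB (η ε L : ℝ) : Prop :=
  ∀ (n : ℕ) (p q : Fvec n → ℝ), IsDist p → IsDist q →
    ∃ V : Submodule (ZMod 2) (Fvec n),
      ent (unifOn (V : Set (Fvec n))) ≤ L * (ent p + ent q) ∧
      ent (conv (push V.mkQ p) (push V.mkQ q)) ≥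
        (1 - η) * (ent (push V.mkQ p) + ent (push V.mkQ q)) - ε * (ent p + ent q)

/-!
Write `T = H[X] + H[Y]` and `s[X ; Y] = H[X] + H[Y] - H[X + Y]`. It is enough to show, for every
`η > 0`, that if `s[X ; Y] ≥ η T` then passing to the quotient by a subspace of size `exp (O(T))`
lowers `T` by a constant proportion: this step is repeated with `X` and each of the sums
`X₁ + ⋯ + X_j`, `j < k`, and as it consumes a fixed proportion of `H[X]` each time, it stops after
boundedly many rounds, at which point either `H[X̃]` is small or all `s[X̃ ; X̃₁ + ⋯ + X̃_j]` are.

For `η` close to `1 / 2` the hypothesis says that the entropic Ruzsa distance of `X` and `Y` is a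
small multiple of `T`, and the entropic Freiman–Ruzsa theorem of Gowers, Green, Manners and Tao
applies. The exponent is then lowered step by step. Suppose the claim holds for `β`; iterating it
makes any pair regular, in the sense that `s[X ; Y] ≤ β T` up to a small error. Given a pair with
`s[X ; Y]` only slightly less than `β T`, regularise `X₁ + X₂` and `Y₁ + Y₂`, so that
`s[X₁ + X₂ ; Y₁ + Y₂]` is not much larger than `β (H[X₁ + X₂] + H[Y₁ + Y₂])`. If
`s[X₁ ; Y₁ | X₁ + X₂, Y₁ + Y₂]` is large, then regularising the conditioned variables makes their
entropies drop. Otherwise a certain conditional mutual information is small, and by the entropic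
Balog–Szemerédi–Gowers theorem the law of `X₁ + Y₁` given both sums has small doubling; its quotient
then loses nearly all its entropy, and so again the conditioned variables lose entropy.
-/

section Averages

variable {A B C : Type*}

/-- The weighted sum `∑ c a * f a`, that is, the expectation of `f` when `c` is a distribution. -/
def avg (c f : A → ℝ) : ℝ := ∑ᶠ a, c a * f a

lemma avg_eq_sum [Fintype A] (c f : A → ℝ) : avg c f = ∑ a, c a * f a :=
  finsum_eq_sum_of_fintype _

lemma ent_eq_avg (p : A → ℝ) : ent p = avg p fun a => -log (p a) := by
  simp only [ent, avg, negMulLog, mul_neg, neg_mul]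

lemma ent_eq_sum [Fintype A] (p : A → ℝ) : ent p = ∑ a, negMulLog (p a) :=
  finsum_eq_sum_of_fintype _

lemma isDist_iff_mem_stdSimplex [Fintype A] {p : A → ℝ} : IsDist p ↔ p ∈ stdSimplex ℝ A := by
  rw [IsDist, finsum_eq_sum_of_fintype]; rfl

lemma IsDist.sum_eq_one [Fintype A] {p : A → ℝ} (hp : IsDist p) : ∑ a, p a = 1 :=
  (isDist_iff_mem_stdSimplex.1 hp).2

lemma avg_const_right (c : A → ℝ) (t : ℝ) : avg c (fun _ => t) = (∑ᶠ a, c a) * t := by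
  rw [avg, finsum_mul]

lemma IsDist.avg_const {c : A → ℝ} (hc : IsDist c) (t : ℝ) : avg c (fun _ => t) = t := by
  rw [avg_const_right, hc.2, one_mul]

lemma IsDist.exists_ne_zero {p : A → ℝ} (hp : IsDist p) : ∃ a, p a ≠ 0 := by
  by_contra! h
  simpa only [h, finsum_zero, zero_ne_one] using hp.2

lemma IsDist.le_one [Finite A] {p : A → ℝ} (hp : IsDist p) (a : A) : p a ≤ 1 := by
  have := Fintype.ofFinite A
  rw [← hp.sum_eq_one]
  exact Finset.single_le_sum (fun i _ => hp.1 i) (Finset.mem_univ a)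

lemma avg_const_mul (c : A → ℝ) (t : ℝ) (f : A → ℝ) :
    avg c (fun a => t * f a) = t * avg c f := by
  rw [avg, avg, mul_finsum]
  exact finsum_congr fun a => mul_left_comm _ _ _

variable [Finite A] {c f g : A → ℝ}

lemma avg_add (c f g : A → ℝ) : avg c (fun a => f a + g a) = avg c f + avg c g := by
  have := Fintype.ofFinite A
  simp only [avg_eq_sum, mul_add, Finset.sum_add_distrib]

lemma avg_sub (c f g : A → ℝ) : avg c (fun a => f a - g a) = avg c f - avg c g := by
  have := Fintype.ofFinite A
  simp only [avg_eq_sum, mul_sub, Finset.sum_sub_distrib]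

lemma avg_comm [Finite B] (c : A → ℝ) (d : B → ℝ) (F : A → B → ℝ) :
    avg c (fun a => avg d fun b => F a b) = avg d fun b => avg c fun a => F a b := by
  have := Fintype.ofFinite A
  have := Fintype.ofFinite B
  simp only [avg_eq_sum, Finset.mul_sum]
  rw [Finset.sum_comm]
  simp only [mul_left_comm]

lemma avg_mono (hc : ∀ a, 0 ≤ c a) (h : ∀ a, c a ≠ 0 → f a ≤ g a) : avg c f ≤ avg c g := by
  have := Fintype.ofFinite A
  simp only [avg_eq_sum]
  refine Finset.sum_le_sum fun a _ => ?_
  by_cases hca : c a = 0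
  · simp [hca]
  · exact mul_le_mul_of_nonneg_left (h a hca) (hc a)

lemma IsDist.exists_le_avg (hc : IsDist c) (f : A → ℝ) : ∃ a, f a ≤ avg c f := by
  by_contra! h
  have := Fintype.ofFinite A
  have hlt : avg c (fun _ => avg c f) < avg c f := by
    simp only [avg_eq_sum (c := c)]
    obtain ⟨a, -, ha⟩ := Finset.exists_ne_zero_of_sum_ne_zero
      (hc.sum_eq_one.trans_ne one_ne_zero)
    refine Finset.sum_lt_sum (fun b _ => mul_le_mul_of_nonneg_left ?_ (hc.1 b))
      ⟨a, Finset.mem_univ a, mul_lt_mul_of_pos_left ?_ ((hc.1 a).lt_of_ne' ha)⟩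
    · exact (avg_eq_sum c f) ▸ (h b).le
    · exact (avg_eq_sum c f) ▸ h a
  exact hlt.ne (hc.avg_const _)

lemma IsDist.exists_avg_le (hc : IsDist c) (f : A → ℝ) : ∃ a, avg c f ≤ f a := by
  obtain ⟨a, ha⟩ := hc.exists_le_avg fun a => -1 * f a
  rw [avg_const_mul] at ha
  exact ⟨a, by linarith⟩

end Averages

section Pushforward

variable {A B C : Type*}

lemma push_apply [DecidableEq B] (f : A → B) (p : A → ℝ) (b : B) :
    push f p b = avg p fun a => if f a = b then 1 else 0 := by
  refine finsum_congr fun a => ?_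
  by_cases h : f a = b <;> simp [h]

lemma push_id (p : A → ℝ) : push id p = p :=
  funext fun _ => finsum_mem_singleton

lemma push_equiv (e : A ≃ B) (p : A → ℝ) : push e p = p ∘ e.symm := by
  funext b
  have : e ⁻¹' {b} = {e.symm b} := by
    ext a
    simp [e.eq_symm_apply]
  rw [push, this, finsum_mem_singleton, Function.comp_apply]

lemma push_fst_apply (r : A × B → ℝ) (a : A) : push Prod.fst r a = ∑ᶠ b, r (a, b) := by
  have hfibre : (Prod.fst ⁻¹' {a} : Set (A × B)) = Prod.mk a '' Set.univ := by
    ext ⟨a', b⟩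
    simp [eq_comm]
  rw [push, hfibre, finsum_mem_image (Prod.mk_right_injective a).injOn, finsum_mem_univ]

lemma push_snd_apply (r : A × B → ℝ) (b : B) : push Prod.snd r b = ∑ᶠ a, r (a, b) := by
  have hfibre : (Prod.snd ⁻¹' {b} : Set (A × B)) = (fun a => (a, b)) '' Set.univ := by
    ext ⟨a, b'⟩
    simp [eq_comm]
  rw [push, hfibre, finsum_mem_image (Prod.mk_left_injective b).injOn, finsum_mem_univ]

lemma push_nonneg (f : A → B) {p : A → ℝ} (hp : ∀ a, 0 ≤ p a) (b : B) : 0 ≤ push f p b :=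
  finsum_nonneg fun a => finsum_nonneg fun _ => hp a

variable [Finite A]

lemma le_push (f : A → B) {p : A → ℝ} (hp : ∀ a, 0 ≤ p a) (a : A) : p a ≤ push f p (f a) := by
  classical
  have := Fintype.ofFinite A
  calc p a = p a * if f a = f a then 1 else 0 := by rw [if_pos rfl, mul_one]
    _ ≤ ∑ a', p a' * if f a' = f a then 1 else 0 :=
        Finset.single_le_sum (f := fun a' => p a' * if f a' = f a then 1 else 0)
          (fun a' _ => mul_nonneg (hp a') (by positivity)) (Finset.mem_univ a)
    _ = push f p (f a) := by rw [push_apply, avg_eq_sum]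

lemma push_pos (f : A → B) {p : A → ℝ} (hp : ∀ a, 0 ≤ p a) {a : A} (ha : p a ≠ 0) :
    0 < push f p (f a) :=
  ((hp a).lt_of_ne' ha).trans_le (le_push f hp a)

lemma avg_push (f : A → B) (p : A → ℝ) (g : B → ℝ) :
    avg (push f p) g = avg p (g ∘ f) := by
  classical
  have := Fintype.ofFinite A
  have hsupp : (Function.support fun b => push f p b * g b) ⊆ Finset.univ.image f := by
    refine Function.support_subset_iff'.2 fun b hb => ?_
    simp only [Finset.coe_image, Finset.coe_univ, Set.image_univ, Set.mem_range,
      not_exists] at hb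
    simp [push_apply, avg_eq_sum, hb]
  rw [avg, finsum_eq_sum_of_support_subset _ hsupp, avg_eq_sum,
    ← Finset.sum_fiberwise_of_maps_to fun a _ => Finset.mem_image_of_mem f (Finset.mem_univ a)]
  refine Finset.sum_congr rfl fun b _ => ?_
  rw [push_apply, avg_eq_sum, Finset.sum_mul, Finset.sum_filter]
  refine Finset.sum_congr rfl fun a _ => ?_
  split_ifs with h
  · rw [mul_one, Function.comp_apply, h]
  · rw [mul_zero, zero_mul]

lemma finsum_push (f : A → B) (p : A → ℝ) : ∑ᶠ b, push f p b = ∑ᶠ a, p a := by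
  simpa only [Function.comp_def, avg_const_right, mul_one] using avg_push f p fun _ => 1

protected lemma IsDist.push (f : A → B) {p : A → ℝ} (hp : IsDist p) : IsDist (push f p) :=
  ⟨push_nonneg f hp.1, (finsum_push f p).trans hp.2⟩

lemma push_push (f : A → B) (g : B → C) (p : A → ℝ) : push g (push f p) = push (g ∘ f) p := by
  classical
  funext c
  rw [push_apply, avg_push, push_apply]
  rfl

lemma ent_push_eq_avg (f : A → B) (p : A → ℝ) :
    ent (push f p) = avg p fun a => -log (push f p (f a)) := by
  rw [ent_eq_avg, avg_push]
  rfl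

end Pushforward

section Entropy

variable {Ω A B C D : Type*}

lemma IsDist.ent_nonneg [Finite A] {p : A → ℝ} (hp : IsDist p) : 0 ≤ ent p :=
  finsum_nonneg fun a => negMulLog_nonneg (hp.1 a) (hp.le_one a)

lemma negMulLog_le_cross {x y : ℝ} (hx : 0 ≤ x) (hy : 0 ≤ y) (hxy : y = 0 → x = 0) :
    negMulLog x ≤ x * -log y + (y - x) := by
  rcases hx.eq_or_lt with rfl | hx
  · simpa using hy
  have hy : 0 < y := hy.lt_of_ne' fun h => hx.ne' (hxy h)
  have h := mul_le_mul_of_nonneg_left (log_le_sub_one_of_pos (div_pos hy hx)) hx.le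
  rw [log_div hy.ne' hx.ne', mul_sub_one, mul_div_cancel₀ _ hx.ne'] at h
  rw [negMulLog]
  linarith

lemma ent_le_cross_entropy [Finite A] {p q : A → ℝ} (hp : ∀ a, 0 ≤ p a) (hq : ∀ a, 0 ≤ q a)
    (hpq : ∀ a, q a = 0 → p a = 0) (hle : ∑ᶠ a, q a ≤ ∑ᶠ a, p a) :
    ent p ≤ avg p fun a => -log (q a) := by
  have := Fintype.ofFinite A
  rw [finsum_eq_sum_of_fintype, finsum_eq_sum_of_fintype] at hle
  have h := Finset.sum_le_sum fun a (_ : a ∈ Finset.univ) =>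
    negMulLog_le_cross (hp a) (hq a) (hpq a)
  rw [Finset.sum_add_distrib, Finset.sum_sub_distrib] at h
  rw [ent_eq_sum, avg_eq_sum]
  linarith

lemma condMI_nonneg [Finite A] [Finite B] [Finite C] {r : A × B × C → ℝ} (hr : ∀ z, 0 ≤ r z) :
    0 ≤ condMI r := by
  have := Fintype.ofFinite A
  have := Fintype.ofFinite (B × C)
  set r₁₃ := push (fun z : A × B × C => (z.1, z.2.2)) r with h₁₃
  set r₂₃ := push (fun z : A × B × C => z.2) r with h₂₃
  set r₃ := push (fun z : A × B × C => z.2.2) r with h₃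
  have pos₁₃ {z} (hz : r z ≠ 0) : 0 < r₁₃ (z.1, z.2.2) := push_pos (fun z => (z.1, z.2.2)) hr hz
  have pos₂₃ {z} (hz : r z ≠ 0) : 0 < r₂₃ z.2 := push_pos _ hr hz
  have pos₃ {z} (hz : r z ≠ 0) : 0 < r₃ z.2.2 := push_pos (fun z => z.2.2) hr hz
  have marginal (c : C) : ∑ a, r₁₃ (a, c) = r₃ c := by
    rw [← finsum_eq_sum_of_fintype, ← push_snd_apply, h₁₃, push_push]
    rfl
  -- The law making the first two coordinates independent conditionally on the third.
  let q : A × B × C → ℝ := fun z => r₁₃ (z.1, z.2.2) * r₂₃ z.2 / r₃ z.2.2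
  have hq_nonneg (z) : 0 ≤ q z :=
    div_nonneg (mul_nonneg (push_nonneg _ hr _) (push_nonneg _ hr _)) (push_nonneg _ hr _)
  have hq_mass : ∑ᶠ z, q z ≤ ∑ᶠ z, r z := by
    rw [← finsum_push (fun z : A × B × C => z.2) r, finsum_eq_sum_of_fintype,
      finsum_eq_sum_of_fintype, Fintype.sum_prod_type_right]
    refine Finset.sum_le_sum fun w _ => ?_
    simp only [q]
    rw [← Finset.sum_div, ← Finset.sum_mul, marginal, mul_div_right_comm]
    exact mul_le_of_le_one_left (push_nonneg _ hr _) (div_self_le_one _)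
  have hq_ac (z) (hz : q z = 0) : r z = 0 := by
    by_contra h
    exact (div_pos (mul_pos (pos₁₃ h) (pos₂₃ h)) (pos₃ h)).ne' hz
  have hlog : avg r (fun z => -log (q z)) = ent r₁₃ + ent r₂₃ - ent r₃ := by
    rw [h₁₃, h₂₃, h₃, ent_push_eq_avg, ent_push_eq_avg, ent_push_eq_avg, ← avg_add, ← avg_sub]
    refine finsum_congr fun z => ?_
    by_cases hz : r z = 0
    · rw [hz, zero_mul, zero_mul]
    · simp only [q, log_div (mul_pos (pos₁₃ hz) (pos₂₃ hz)).ne' (pos₃ hz).ne',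
        log_mul (pos₁₃ hz).ne' (pos₂₃ hz).ne']
      ring
  have := ent_le_cross_entropy hr hq_nonneg hq_ac hq_mass
  rw [condMI]
  linarith

variable [Finite Ω] {μ : Ω → ℝ}

lemma ent_push_le_of_factorsThrough (hμ : ∀ w, 0 ≤ μ w) {f : Ω → A} {g : Ω → B}
    (h : g.FactorsThrough f) : ent (push g μ) ≤ ent (push f μ) := by
  classical
  rw [ent_push_eq_avg, ent_push_eq_avg]
  refine avg_mono hμ fun w hw => neg_le_neg (log_le_log (push_pos f hμ hw) ?_)
  rw [push_apply, push_apply]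
  refine avg_mono hμ fun w' _ => ?_
  split_ifs with hf hg hg
  exacts [le_rfl, absurd (h hf) hg, zero_le_one, le_rfl]

lemma ent_push_le (hμ : ∀ w, 0 ≤ μ w) (f : Ω → A) : ent (push f μ) ≤ ent μ := by
  simpa only [push_id] using
    ent_push_le_of_factorsThrough hμ (f := id) (g := f) fun _ _ h => congrArg f h

lemma ent_push_congr (hμ : ∀ w, 0 ≤ μ w) {f : Ω → A} {g : Ω → B}
    (h : ∀ w w', f w = f w' ↔ g w = g w') : ent (push f μ) = ent (push g μ) :=
  le_antisymm (ent_push_le_of_factorsThrough hμ fun w w' => (h w w').2)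
    (ent_push_le_of_factorsThrough hμ fun w w' => (h w w').1)

lemma ent_push_of_injective (hμ : ∀ w, 0 ≤ μ w) {f : Ω → A} (hf : f.Injective) :
    ent (push f μ) = ent μ := by
  rw [ent_push_congr hμ (f := f) (g := id) fun _ _ => hf.eq_iff, push_id]

lemma ent_push_submodular [Finite A] [Finite B] [Finite C] (hμ : ∀ w, 0 ≤ μ w)
    {f : Ω → A} {g : Ω → B} {h : Ω → C} {j : Ω → D} (hf : h.FactorsThrough f)
    (hg : h.FactorsThrough g) (hj : j.FactorsThrough fun w => (f w, g w)) :
    ent (push j μ) + ent (push h μ) ≤ ent (push f μ) + ent (push g μ) := by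
  have hMI := condMI_nonneg (push_nonneg (fun w => (f w, g w, h w)) hμ)
  have hfh : ent (push (fun w => (f w, h w)) μ) = ent (push f μ) :=
    ent_push_congr hμ fun w w' => ⟨fun e => (Prod.mk.inj e).1, fun e => Prod.ext e (hf e)⟩
  have hgh : ent (push (fun w => (g w, h w)) μ) = ent (push g μ) :=
    ent_push_congr hμ fun w w' => ⟨fun e => (Prod.mk.inj e).1, fun e => Prod.ext e (hg e)⟩
  have hle : ent (push j μ) ≤ ent (push (fun w => (f w, g w, h w)) μ) :=
    ent_push_le_of_factorsThrough hμ fun w w' e => hj (by grind)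
  simp only [condMI, push_push, Function.comp_def] at hMI
  linarith

lemma IsDist.ent_push_eq_zero (hμ : IsDist μ) {f : Ω → A} {a : A} (hf : ∀ w, μ w ≠ 0 → f w = a) :
    ent (push f μ) = 0 := by
  classical
  have hpush (w) (hw : μ w ≠ 0) : push f μ (f w) = 1 := by
    rw [push_apply]
    refine (finsum_congr fun w' => ?_).trans hμ.2
    by_cases hw' : μ w' = 0
    · simp [hw']
    · simp [hf w hw, hf w' hw']
  rw [ent_push_eq_avg]
  refine finsum_eq_zero_of_forall_eq_zero fun w => ?_
  by_cases hw : μ w = 0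
  · rw [hw, zero_mul]
  · simp only [hpush w hw, log_one, neg_zero, mul_zero]

lemma IsDist.ent_push_pair_le [Finite A] [Finite B] (hμ : IsDist μ) (f : Ω → A) (g : Ω → B) :
    ent (push (fun w => (f w, g w)) μ) ≤ ent (push f μ) + ent (push g μ) := by
  have h := ent_push_submodular hμ.1 (f := f) (g := g) (h := fun _ => ()) (fun _ _ _ => rfl)
    (fun _ _ _ => rfl) fun _ _ e => e
  rwa [hμ.ent_push_eq_zero fun _ _ => rfl, add_zero] at h

end Entropy

section Kernels

variable {A B C : Type*}

/-- The joint law of `(X, Y)` where `X ∼ c` and, given `X = a`, `Y ∼ P a`. -/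
def compProd (c : A → ℝ) (P : A → B → ℝ) : A × B → ℝ := fun z => c z.1 * P z.1 z.2

/-- The law of `Y` where `X ∼ c` and, given `X = a`, `Y ∼ P a`. -/
def mix (c : A → ℝ) (P : A → B → ℝ) : B → ℝ := fun b => avg c fun a => P a b

lemma prodDist_eq_compProd (p : A → ℝ) (q : B → ℝ) : prodDist p q = compProd p fun _ => q := rfl

lemma push_snd_compProd (c : A → ℝ) (P : A → B → ℝ) : push Prod.snd (compProd c P) = mix c P :=
  funext fun b => push_snd_apply _ b

lemma push_fst_compProd (c : A → ℝ) {P : A → B → ℝ} (hP : ∀ a, IsDist (P a)) :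
    push Prod.fst (compProd c P) = c := by
  funext a
  simp only [push_fst_apply, compProd, ← mul_finsum, (hP a).2, mul_one]

variable [Finite A] [Finite B] {c : A → ℝ} {P : A → B → ℝ} {p : A → ℝ} {q : B → ℝ}

lemma avg_compProd (c : A → ℝ) (P : A → B → ℝ) (F : A × B → ℝ) :
    avg (compProd c P) F = avg c fun a => avg (P a) fun b => F (a, b) := by
  have := Fintype.ofFinite A
  have := Fintype.ofFinite B
  simp only [avg_eq_sum, compProd, Fintype.sum_prod_type, Finset.mul_sum, mul_assoc]

lemma avg_prodDist_fst (p F : A → ℝ) (hq : IsDist q) :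
    avg (prodDist p q) (fun z => F z.1) = avg p F := by
  simp only [prodDist_eq_compProd, avg_compProd, hq.avg_const]

lemma avg_prodDist_snd (hp : IsDist p) (q F : B → ℝ) :
    avg (prodDist p q) (fun z => F z.2) = avg q F := by
  simp only [prodDist_eq_compProd, avg_compProd, hp.avg_const]

protected lemma IsDist.compProd (hc : IsDist c) (hP : ∀ a, IsDist (P a)) :
    IsDist (compProd c P) := by
  refine ⟨fun z => mul_nonneg (hc.1 _) ((hP _).1 _), ?_⟩
  rw [← finsum_push Prod.fst, push_fst_compProd c hP, hc.2]

protected lemma IsDist.prodDist (hp : IsDist p) (hq : IsDist q) : IsDist (prodDist p q) :=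
  hp.compProd fun _ => hq

protected lemma IsDist.mix (hc : IsDist c) (hP : ∀ a, IsDist (P a)) : IsDist (mix c P) :=
  push_snd_compProd c P ▸ (hc.compProd hP).push _

lemma push_compProd (f : A → B → C) (c : A → ℝ) (P : A → B → ℝ) :
    push (fun z => (z.1, f z.1 z.2)) (compProd c P) = compProd c fun a => push (f a) (P a) := by
  classical
  have := Fintype.ofFinite A
  funext ⟨a, b⟩
  rw [push_apply, avg_compProd, compProd, push_apply, avg_eq_sum, Finset.sum_eq_single a]
  · simp only [Prod.mk.injEq, true_and]
  · intro a' _ ha'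
    simp [ha', avg]
  · simp

lemma ent_compProd (c : A → ℝ) (hP : ∀ a, IsDist (P a)) :
    ent (compProd c P) = ent c + avg c fun a => ent (P a) := by
  have := Fintype.ofFinite A
  have := Fintype.ofFinite B
  rw [ent_eq_sum, ent_eq_sum, avg_eq_sum, Fintype.sum_prod_type, ← Finset.sum_add_distrib]
  refine Finset.sum_congr rfl fun a _ => ?_
  simp only [compProd, negMulLog_mul]
  rw [Finset.sum_add_distrib, ← Finset.sum_mul, ← Finset.mul_sum, (hP a).sum_eq_one, one_mul,
    ent_eq_sum]

lemma IsDist.ent_prodDist (hp : IsDist p) (hq : IsDist q) :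
    ent (prodDist p q) = ent p + ent q := by
  rw [prodDist_eq_compProd, ent_compProd p fun _ => hq, hp.avg_const]

lemma IsDist.avg_ent_le_ent_mix (hc : IsDist c) (hP : ∀ a, IsDist (P a)) :
    avg c (fun a => ent (P a)) ≤ ent (mix c P) := by
  have h := (hc.compProd hP).ent_push_pair_le Prod.fst Prod.snd
  rw [push_fst_compProd c hP, push_snd_compProd, show push (fun z : A × B => (z.1, z.2)) _ = _
    from push_id _, ent_compProd c hP] at h
  linarith

lemma IsDist.avg_ent_sub_push_le [Finite C] (hc : IsDist c) (hP : ∀ a, IsDist (P a)) (φ : B → C) :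
    avg c (fun a => ent (P a) - ent (push φ (P a))) ≤ ent (mix c P) - ent (push φ (mix c P)) := by
  have hsub := ent_push_submodular (hc.compProd hP).1 (f := fun z => (z.1, φ z.2)) (g := Prod.snd)
    (h := φ ∘ Prod.snd) (j := id) (fun _ _ h => (Prod.mk.inj h).2)
    (fun _ _ h => congrArg φ h) (fun _ _ h => by grind)
  rw [push_id, ent_compProd c hP, push_compProd (fun _ => φ),
    ent_compProd c fun a => (hP a).push φ, ← push_push, push_snd_compProd] at hsub
  rw [avg_sub]
  linarith

lemma IsDist.exists_compProd_eq {r : A × B → ℝ} (hr : IsDist r) :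
    ∃ P : A → B → ℝ, (∀ a, IsDist (P a)) ∧ compProd (push Prod.fst r) P = r := by
  classical
  have := Fintype.ofFinite B
  -- On fibres of mass zero the conditional law is arbitrary.
  refine ⟨fun a => if push Prod.fst r a = 0 then push Prod.snd r else
    fun b => r (a, b) / push Prod.fst r a, fun a => ?_, funext fun ⟨a, b⟩ => ?_⟩
  · dsimp only
    split_ifs with h
    · exact hr.push _
    · refine ⟨fun b => div_nonneg (hr.1 _) (push_nonneg _ hr.1 _), ?_⟩
      simp only [div_eq_mul_inv, ← finsum_mul, ← push_fst_apply, mul_inv_cancel₀ h]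
  · simp only [compProd]
    split_ifs with h
    · have := le_push Prod.fst hr.1 (a, b)
      rw [h, zero_mul]
      exact (hr.1 _).antisymm (this.trans_eq h)
    · exact mul_div_cancel₀ _ h

lemma push_prodMap {A' B' : Type*} (f : A → A') (g : B → B') (p : A → ℝ) (q : B → ℝ) :
    push (Prod.map f g) (prodDist p q) = prodDist (push f p) (push g q) := by
  classical
  funext ⟨x, y⟩
  have hsplit (a : A) (b : B) : (if Prod.map f g (a, b) = (x, y) then (1 : ℝ) else 0)
      = (if f a = x then 1 else 0) * if g b = y then 1 else 0 := by
    simp only [Prod.map_apply, Prod.mk.injEq, ite_and, ite_mul, one_mul, zero_mul]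
  calc push (Prod.map f g) (prodDist p q) (x, y)
      = avg p fun a => avg q fun b =>
          (if f a = x then 1 else 0) * if g b = y then 1 else 0 := by
        rw [push_apply, prodDist_eq_compProd, avg_compProd]
        simp only [hsplit]
    _ = avg p fun a => push g q y * if f a = x then 1 else 0 := by
        simp only [avg_const_mul, ← push_apply, mul_comm]
    _ = prodDist (push f p) (push g q) (x, y) := by
        rw [avg_const_mul, ← push_apply, mul_comm, prodDist]

end Kernels

section Convolution

variable {G H F : Type*} [AddCommGroup G] [Finite G] [AddCommGroup H]
  [FunLike F G H] [AddMonoidHomClass F G H] {p q r : G → ℝ}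

lemma conv_eq_push (p q : G → ℝ) : conv p q = push (fun z => z.1 + z.2) (prodDist p q) := by
  classical
  funext z
  rw [push_apply, prodDist_eq_compProd, avg_compProd]
  refine finsum_congr fun x => ?_
  congr 1
  simp only [← eq_sub_iff_add_eq', ← push_apply]
  exact (congrFun (push_id q) (z - x)).symm

protected lemma IsDist.conv (hp : IsDist p) (hq : IsDist q) : IsDist (conv p q) :=
  conv_eq_push p q ▸ (hp.prodDist hq).push _

lemma conv_comm (p q : G → ℝ) : conv p q = conv q p := by
  have hswap : prodDist q p = push Prod.swap (prodDist p q) := by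
    rw [show (Prod.swap : G × G → G × G) = Equiv.prodComm G G from rfl, push_equiv]
    exact funext fun z => mul_comm _ _
  rw [conv_eq_push, conv_eq_push, hswap, push_push]
  congr 1
  exact funext fun z => add_comm _ _

lemma prodDist_assoc {A B C : Type*} (p : A → ℝ) (q : B → ℝ) (r : C → ℝ) :
    prodDist (prodDist p q) r =
      push (Equiv.prodAssoc A B C).symm (prodDist p (prodDist q r)) := by
  rw [push_equiv]
  exact funext fun z => mul_assoc _ _ _

lemma conv_conv_eq_push (p q r : G → ℝ) :
    conv (conv p q) r = push (fun z => z.1 + z.2.1 + z.2.2) (prodDist p (prodDist q r)) := by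
  rw [conv_eq_push (conv p q) r, conv_eq_push p q]
  conv_lhs => rw [← push_id r]
  rw [← push_prodMap, prodDist_assoc, push_push, push_push]
  rfl

lemma conv_assoc (p q r : G → ℝ) : conv (conv p q) r = conv p (conv q r) := by
  rw [conv_conv_eq_push, conv_eq_push p (conv q r), conv_eq_push q r]
  conv_rhs => rw [← push_id p]
  rw [← push_prodMap, push_push]
  congr 1
  exact funext fun z => add_assoc _ _ _

lemma push_conv [Finite H] (φ : F) (p q : G → ℝ) :
    push φ (conv p q) = conv (push φ p) (push φ q) := by
  rw [conv_eq_push, conv_eq_push, ← push_prodMap, push_push, push_push]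
  congr 1
  exact funext fun z => map_add φ _ _

lemma conv_mix {B : Type*} [Finite B] (c : B → ℝ) (P : B → G → ℝ) (t : G → ℝ) :
    conv t (mix c P) = mix c fun b => conv t (P b) :=
  funext fun _ => avg_comm _ _ _

lemma ent_le_ent_conv_right (hp : IsDist p) (hq : IsDist q) : ent q ≤ ent (conv p q) := by
  have h := (hp.prodDist hq).ent_push_pair_le Prod.fst fun z => z.1 + z.2
  rw [ent_push_of_injective (hp.prodDist hq).1 (fun _ _ => by grind), hp.ent_prodDist hq,
    ← conv_eq_push, prodDist_eq_compProd, push_fst_compProd p fun _ => hq] at h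
  linarith

lemma ent_le_ent_conv_left (hp : IsDist p) (hq : IsDist q) : ent p ≤ ent (conv p q) :=
  conv_comm q p ▸ ent_le_ent_conv_right hq hp

lemma ent_conv_le (hp : IsDist p) (hq : IsDist q) : ent (conv p q) ≤ ent p + ent q := by
  rw [← hp.ent_prodDist hq, conv_eq_push]
  exact ent_push_le (hp.prodDist hq).1 _

/-- The Kaimanovich–Vershik–Madiman inequality. -/
lemma ent_conv_conv_add_le (hp : IsDist p) (hq : IsDist q) (hr : IsDist r) :
    ent (conv (conv p q) r) + ent q ≤ ent (conv p q) + ent (conv q r) := by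
  have hd := hp.prodDist (hq.prodDist hr)
  have h := ent_push_submodular hd.1 (f := fun z => (z.1 + z.2.1, z.2.2))
    (g := fun z => (z.1, z.2.1 + z.2.2)) (h := fun z => z.1 + z.2.1 + z.2.2) (j := id)
    (fun _ _ => by grind) (fun _ _ => by grind) (fun _ _ => by simp only [Prod.ext_iff, id]; grind)
  have hpq : push (fun z => (z.1 + z.2.1, z.2.2)) (prodDist p (prodDist q r)) =
      prodDist (conv p q) r := by
    conv_rhs => rw [← push_id r]
    rw [conv_eq_push, ← push_prodMap, prodDist_assoc, push_push]
    rfl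
  have hqr : push (fun z => (z.1, z.2.1 + z.2.2)) (prodDist p (prodDist q r)) =
      prodDist p (conv q r) := by
    conv_rhs => rw [← push_id p]
    rw [conv_eq_push, ← push_prodMap]
    rfl
  rw [← conv_conv_eq_push, push_id, hpq, hqr, hp.ent_prodDist (hq.prodDist hr),
    hq.ent_prodDist hr, (hp.conv hq).ent_prodDist hr, hp.ent_prodDist (hq.conv hr)] at h
  linarith

lemma ent_add_ent_conv_push_le [Finite H] (φ : F) (hp : IsDist p) (hq : IsDist q) :
    ent p + ent (conv (push φ p) (push φ q)) ≤ ent (conv p q) + ent (push φ p) := by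
  have h := ent_push_submodular (hp.prodDist hq).1 (f := fun z => z.1 + z.2)
    (g := Prod.map φ id) (h := φ ∘ fun z => z.1 + z.2) (j := id)
    (fun _ _ e => congrArg φ e) (fun _ _ => by grind) (fun _ _ => by grind)
  rw [push_id, push_prodMap, push_id, ← push_push, ← conv_eq_push, push_conv,
    hp.ent_prodDist hq, (hp.push φ).ent_prodDist hq] at h
  linarith

end Convolution

section Fibring

variable {G : Type*} [AddCommGroup G] {p p' q q' : G → ℝ} {P R : G → G → ℝ}

/-- `P u` is the law of `X` conditioned on `X + Y = u`, for independent `X ∼ p` and `Y ∼ q`.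
Off the support of `X + Y` the law `P u` is arbitrary. -/
structure IsSumKernel (p q : G → ℝ) (P : G → G → ℝ) : Prop where
  isDist : ∀ u, IsDist (P u)
  compProd_eq : compProd (conv p q) P = push (fun z => (z.1 + z.2, z.1)) (prodDist p q)

variable [Finite G]

lemma exists_isSumKernel (hp : IsDist p) (hq : IsDist q) : ∃ P, IsSumKernel p q P := by
  obtain ⟨P, hP, h⟩ :=
    ((hp.prodDist hq).push fun z => (z.1 + z.2, z.1)).exists_compProd_eq
  rw [push_push] at h
  exact ⟨P, hP, conv_eq_push p q ▸ h⟩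

lemma IsSumKernel.mix_eq (hP : IsSumKernel p q P) (hq : IsDist q) : mix (conv p q) P = p := by
  rw [← push_snd_compProd, hP.compProd_eq, push_push]
  exact push_fst_compProd p fun _ => hq

lemma IsSumKernel.avg_ent (hP : IsSumKernel p q P) (hp : IsDist p) (hq : IsDist q) :
    avg (conv p q) (fun u => ent (P u)) = sDouble p q := by
  have h := ent_compProd (conv p q) hP.isDist
  rw [hP.compProd_eq, ent_push_of_injective (hp.prodDist hq).1
    fun _ _ => by simp only [Prod.ext_iff]; grind, hp.ent_prodDist hq] at h
  rw [sDouble]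
  linarith

lemma prodDist_prodDist_comm {A B C D : Type*} (p : A → ℝ) (p' : B → ℝ) (q : C → ℝ) (q' : D → ℝ) :
    push (Equiv.prodProdProdComm A B C D) (prodDist (prodDist p p') (prodDist q q')) =
      prodDist (prodDist p q) (prodDist p' q') := by
  rw [push_equiv]
  exact funext fun z => mul_mul_mul_comm _ _ _ _

lemma push_add_prodDist_prodDist (p p' q q' : G → ℝ) :
    push (fun z => (z.1.1 + z.2.1, z.1.2 + z.2.2)) (prodDist (prodDist p p') (prodDist q q')) =
      prodDist (conv p q) (conv p' q') := by
  rw [conv_eq_push, conv_eq_push, ← push_prodMap, ← prodDist_prodDist_comm, push_push]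
  rfl

lemma IsSumKernel.compProd_conv_eq (hP : IsSumKernel p p' P) (hR : IsSumKernel q q' R) :
    compProd (prodDist (conv p p') (conv q q')) (fun z => conv (P z.1) (R z.2)) =
      push (fun z => ((z.1.1 + z.1.2, z.2.1 + z.2.2), z.1.1 + z.2.1))
        (prodDist (prodDist p p') (prodDist q q')) := by
  have hpair : compProd (prodDist (conv p p') (conv q q')) (fun z => prodDist (P z.1) (R z.2)) =
      push (Equiv.prodProdProdComm G G G G)
        (prodDist (compProd (conv p p') P) (compProd (conv q q') R)) := by
    rw [push_equiv]
    exact funext fun z => mul_mul_mul_comm _ _ _ _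
  have h := push_compProd (fun _ y => y.1 + y.2) (prodDist (conv p p') (conv q q'))
    fun z => prodDist (P z.1) (R z.2)
  rw [hpair, hP.compProd_eq, hR.compProd_eq, ← push_prodMap, push_push, push_push] at h
  simp only [conv_eq_push (P _)]
  exact h.symm

lemma IsSumKernel.ent_push_snd_total (hP : IsSumKernel p p' P) (hR : IsSumKernel q q' R)
    (hp : IsDist p) (hp' : IsDist p') (hq : IsDist q) (hq' : IsDist q') :
    ent (push (fun z => (z.2, z.1.1 + z.1.2))
      (compProd (prodDist (conv p p') (conv q q')) fun z => conv (P z.1) (R z.2))) =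
      ent (conv p q) + ent (conv p' q') := by
  rw [hP.compProd_conv_eq hR, push_push, ← (hp.conv hq).ent_prodDist (hp'.conv hq'),
    ← push_add_prodDist_prodDist p p' q q']
  exact ent_push_congr ((hp.prodDist hp').prodDist (hq.prodDist hq')).1
    fun _ _ => by simp only [Function.comp, Prod.ext_iff]; grind

lemma IsSumKernel.ent_push_add_total [Module (ZMod 2) G] (hP : IsSumKernel p p' P)
    (hR : IsSumKernel q q' R) (hp : IsDist p) (hp' : IsDist p') (hq : IsDist q)
    (hq' : IsDist q') :
    ent (push (fun z => (z.2 + z.1.1, z.1.1 + z.1.2))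
      (compProd (prodDist (conv p p') (conv q q')) fun z => conv (P z.1) (R z.2))) =
      ent (conv p' q) + ent (conv p q') := by
  have hswap : prodDist (prodDist p' p) (prodDist q q') =
      push (Prod.map Prod.swap id) (prodDist (prodDist p p') (prodDist q q')) := by
    rw [push_prodMap, push_id]
    congr 1
    rw [show (Prod.swap : G × G → G × G) = Equiv.prodComm G G from rfl, push_equiv]
    exact funext fun z => mul_comm _ _
  rw [hP.compProd_conv_eq hR, push_push, ← (hp'.conv hq).ent_prodDist (hp.conv hq'),
    ← push_add_prodDist_prodDist, hswap, push_push]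
  have hcancel (x y z : G) : x + y + (x + z) = z + y := by
    rw [add_add_add_comm, ZModModule.add_self, zero_add, add_comm]
  exact ent_push_congr ((hp.prodDist hp').prodDist (hq.prodDist hq')).1 fun _ _ => by
    simp only [Function.comp, Prod.map, Prod.ext_iff, id, Prod.fst_swap, Prod.snd_swap, hcancel]
    grind

/-- The submodularity inequalities behind the entropic Balog–Szemerédi–Gowers theorem. -/
lemma ent_add_ent_push_add_three_mul_le {ρ : (G × G) × G × G → ℝ} (hρ : ∀ z, 0 ≤ ρ z) :
    ent ρ + ent (push (fun z => (z.1, z.2.1 + z.2.2)) ρ) +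
        3 * ent (push (fun z => z.1.1 + z.1.2) ρ) ≤
      ent (push Prod.fst ρ) +
        (ent (push (fun z => (z.2.1, z.1.1 + z.1.2)) ρ) +
          ent (push (fun z => (z.2.2, z.1.1 + z.1.2)) ρ)) +
        (ent (push (fun z => (z.2.1 + z.1.1, z.1.1 + z.1.2)) ρ) +
          ent (push (fun z => (z.2.2 + z.1.1, z.1.1 + z.1.2)) ρ)) := by
  have s₁ := ent_push_submodular hρ
    (f := fun z => (z.2.1, z.2.2 + z.1.1, z.1.1 + z.1.2))
    (g := fun z => (z.2.1 + z.1.1, z.2.2, z.1.1 + z.1.2))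
    (h := fun z => (z.2.1 + z.2.2 + z.1.1, z.1.1 + z.1.2)) (j := id)
    (fun _ _ => by grind) (fun _ _ => by grind) (fun _ _ => by simp only [Prod.ext_iff, id]; grind)
  have s₂ := ent_push_submodular hρ (f := fun z => (z.2.1, z.1.1 + z.1.2))
    (g := fun z => (z.2.2 + z.1.1, z.1.1 + z.1.2)) (h := fun z => z.1.1 + z.1.2)
    (j := fun z => (z.2.1, z.2.2 + z.1.1, z.1.1 + z.1.2))
    (fun _ _ => by grind) (fun _ _ => by grind) (fun _ _ => by grind)
  have s₃ := ent_push_submodular hρ (f := fun z => (z.2.1 + z.1.1, z.1.1 + z.1.2))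
    (g := fun z => (z.2.2, z.1.1 + z.1.2)) (h := fun z => z.1.1 + z.1.2)
    (j := fun z => (z.2.1 + z.1.1, z.2.2, z.1.1 + z.1.2))
    (fun _ _ => by grind) (fun _ _ => by grind) (fun _ _ => by grind)
  have s₄ := ent_push_submodular hρ (f := fun z => (z.2.1 + z.2.2 + z.1.1, z.1.1 + z.1.2))
    (g := Prod.fst) (h := fun z => z.1.1 + z.1.2) (j := fun z => (z.1, z.2.1 + z.2.2))
    (fun _ _ => by grind) (fun _ _ => by grind) (fun _ _ => by simp only [Prod.ext_iff]; grind)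
  rw [push_id] at s₁
  linarith

/-- Entropic Balog–Szemerédi–Gowers: draw two conditionally independent samples from `Q z`. -/
lemma avg_ent_conv_self_add_le {m : G × G → ℝ} {Q : G × G → G → ℝ} (hm : IsDist m)
    (hQ : ∀ z, IsDist (Q z)) :
    avg m (fun z => ent (conv (Q z) (Q z))) + 2 * avg m (fun z => ent (Q z)) + ent m +
        3 * ent (push (fun z => z.1 + z.2) m) ≤
      2 * ent (push (fun z => (z.2, z.1.1 + z.1.2)) (compProd m Q)) +
        2 * ent (push (fun z => (z.2 + z.1.1, z.1.1 + z.1.2)) (compProd m Q)) := by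
  have hQQ (z) : IsDist (prodDist (Q z) (Q z)) := (hQ z).prodDist (hQ z)
  set ρ := compProd m fun z => prodDist (Q z) (Q z) with hρ
  have hfst : push (fun z => (z.1, z.2.1)) ρ = compProd m Q := by
    rw [hρ, push_compProd (fun _ (y : G × G) => y.1)]
    congr with z : 1
    exact push_fst_compProd _ fun _ => hQ z
  have hsnd : push (fun z => (z.1, z.2.2)) ρ = compProd m Q := by
    rw [hρ, push_compProd (fun _ (y : G × G) => y.2)]
    congr with z b : 2
    exact (congrFun (push_snd_compProd (Q z) fun _ => Q z) b).trans ((hQ z).avg_const _)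
  have hadd : ent (push (fun z => (z.1, z.2.1 + z.2.2)) ρ) =
      ent m + avg m fun z => ent (conv (Q z) (Q z)) := by
    rw [hρ, push_compProd (fun _ (y : G × G) => y.1 + y.2)]
    simp only [← conv_eq_push]
    exact ent_compProd m fun z => (hQ z).conv (hQ z)
  have hρ_ent : ent ρ = ent m + 2 * avg m fun z => ent (Q z) := by
    rw [hρ, ent_compProd m hQQ, two_mul, ← avg_add]
    simp only [(hQ _).ent_prodDist (hQ _)]
  have hm_eq : push Prod.fst ρ = m := push_fst_compProd m hQQ
  have h := ent_add_ent_push_add_three_mul_le (hm.compProd hQQ).1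
  rw [← hρ, hρ_ent, hadd] at h
  have key (f : (G × G) × G → G × G) :
      ent (push (fun z => f (z.1, z.2.1)) ρ) + ent (push (fun z => f (z.1, z.2.2)) ρ) =
        2 * ent (push f (compProd m Q)) := by
    nth_rw 1 [two_mul, ← hfst, ← hsnd, push_push, push_push]
    rfl
  rw [key fun z => (z.2, z.1.1 + z.1.2), key fun z => (z.2 + z.1.1, z.1.1 + z.1.2), hm_eq,
    show push (fun z => z.1.1 + z.1.2) ρ = push (fun z => z.1 + z.2) m by
      rw [← hm_eq, push_push]; rfl] at h
  linarith

lemma IsSumKernel.avg_ent_conv_conv_self_le [Module (ZMod 2) G] (hP : IsSumKernel p p' P)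
    (hR : IsSumKernel q q' R) (hp : IsDist p) (hp' : IsDist p') (hq : IsDist q)
    (hq' : IsDist q') :
    avg (prodDist (conv p p') (conv q q'))
        (fun z => ent (conv (conv (P z.1) (R z.2)) (conv (P z.1) (R z.2)))) +
      2 * avg (prodDist (conv p p') (conv q q')) (fun z => ent (conv (P z.1) (R z.2))) +
      (ent (conv p p') + ent (conv q q')) + 3 * ent (conv (conv p p') (conv q q')) ≤
      2 * (ent (conv p q) + ent (conv p' q')) + 2 * (ent (conv p' q) + ent (conv p q')) := by
  have h := avg_ent_conv_self_add_le ((hp.conv hp').prodDist (hq.conv hq'))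
    fun z => (hP.isDist z.1).conv (hR.isDist z.2)
  rwa [← conv_eq_push, hP.ent_push_snd_total hR hp hp' hq hq',
    hP.ent_push_add_total hR hp hp' hq hq', (hp.conv hp').ent_prodDist (hq.conv hq')] at h

end Fibring

section RuzsaDistance

variable {G H F : Type*} [AddCommGroup G] [Finite G] [AddCommGroup H]
  [FunLike F G H] [AddMonoidHomClass F G H] {p q r : G → ℝ}

lemma dRuzsa_comm (p q : G → ℝ) : dRuzsa p q = dRuzsa q p := by
  rw [dRuzsa, dRuzsa, conv_comm]
  ring

lemma dRuzsa_triangle (hp : IsDist p) (hq : IsDist q) (hr : IsDist r) :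
    dRuzsa p r ≤ dRuzsa p q + dRuzsa q r := by
  have h := ent_conv_conv_add_le hp hq hr
  have hpr := ent_le_ent_conv_left (hp.conv hr) hq
  rw [conv_assoc, conv_comm r q, ← conv_assoc] at hpr
  simp only [dRuzsa]
  linarith

lemma dRuzsa_nonneg (hp : IsDist p) (hq : IsDist q) : 0 ≤ dRuzsa p q := by
  have := ent_le_ent_conv_left hp hq
  have := ent_le_ent_conv_right hp hq
  rw [dRuzsa]
  linarith

lemma ent_le_ent_add_two_mul_dRuzsa (hp : IsDist p) (hq : IsDist q) :
    ent p ≤ ent q + 2 * dRuzsa p q := by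
  have := ent_le_ent_conv_left hp hq
  rw [dRuzsa]
  linarith

lemma dRuzsa_push_le [Finite H] (φ : F) (hp : IsDist p) (hq : IsDist q) :
    dRuzsa (push φ p) (push φ q) ≤ dRuzsa p q := by
  have hpq := ent_add_ent_conv_push_le φ hp hq
  have hqp := ent_add_ent_conv_push_le φ hq hp
  rw [conv_comm q p, conv_comm (push φ q)] at hqp
  simp only [dRuzsa]
  linarith

lemma IsDist.avg_dRuzsa_le {B : Type*} [Finite B] {c : B → ℝ} {P : B → G → ℝ} (hc : IsDist c)
    (hp : IsDist p) (hP : ∀ b, IsDist (P b)) :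
    avg c (fun b => dRuzsa p (P b)) ≤
      ent (conv p (mix c P)) - ent p / 2 - avg c (fun b => ent (P b)) / 2 := by
  have h := hc.avg_ent_le_ent_mix fun b => hp.conv (hP b)
  have havg : avg c (fun b => dRuzsa p (P b)) = avg c (fun b => ent (conv p (P b))) -
      ent p / 2 - 1 / 2 * avg c fun b => ent (P b) := by
    rw [← hc.avg_const (ent p / 2), ← avg_const_mul, ← avg_sub, ← avg_sub]
    exact congrArg _ (funext fun b => by rw [dRuzsa]; ring)
  rw [← conv_mix] at h
  linarith

end RuzsaDistance

section Improvement

variable {G : Type*} [AddCommGroup G] [Finite G] {p q : G → ℝ} {P R : G → G → ℝ}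

/-- The functional `d[X ; Y] + (d[X₀ ; X] + d[Y₀ ; Y]) / 64` of Gowers, Green, Manners and Tao,
whose minimisers `x`, `y` over all pairs of laws satisfy `d[X ; Y] = 0`. -/
def penalizedDist (p q x y : G → ℝ) : ℝ := dRuzsa x y + 1 / 64 * (dRuzsa p x + dRuzsa q y)

lemma ent_conv_conv_left_add_le (hp : IsDist p) (hq : IsDist q) :
    ent (conv p (conv p q)) + ent q ≤ 2 * ent (conv p q) := by
  have h := ent_conv_conv_add_le hp hq hp
  rw [conv_comm q p] at h
  rw [conv_comm p]
  linarith

lemma ent_conv_self_add_le (hp : IsDist p) (hq : IsDist q) :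
    ent (conv p p) + ent q ≤ 2 * ent (conv p q) := by
  have h := ent_le_ent_conv_left (hp.conv hp) hq
  rw [conv_assoc] at h
  linarith [ent_conv_conv_left_add_le hp hq]

lemma dRuzsa_self_conv_self_le (hp : IsDist p) (hq : IsDist q) :
    dRuzsa p (conv p p) ≤ 3 * dRuzsa p q := by
  have h₁ := ent_conv_conv_left_add_le hp hp
  have h₂ := ent_conv_self_add_le hp hq
  simp only [dRuzsa]
  linarith

lemma avg_dRuzsa_self_le {B : Type*} [Finite B] {c : B → ℝ} {Q : B → G → ℝ} (hc : IsDist c)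
    (hQ : ∀ b, IsDist (Q b)) (hp : IsDist p) (hq : IsDist q)
    (hmix : ent (conv p (mix c Q)) + ent q ≤ 2 * ent (conv p q))
    (hent : sDouble p p ≤ avg c fun b => ent (Q b)) :
    avg c (fun b => dRuzsa p (Q b)) ≤ 3 * dRuzsa p q := by
  have h₁ := hc.avg_dRuzsa_le hp hQ
  have h₂ := ent_conv_self_add_le hp hq
  rw [sDouble] at hent
  rw [dRuzsa]
  linarith

lemma mix_prodDist_conv (a b : G → ℝ) (P R : G → G → ℝ) :
    mix (prodDist a b) (fun z => conv (P z.1) (R z.2)) = conv (mix a P) (mix b R) := by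
  rw [conv_mix]
  simp only [conv_comm (mix a P), conv_mix]
  funext x
  rw [mix, prodDist_eq_compProd, avg_compProd, avg_comm]
  simp only [conv_comm (P _)]
  rfl

lemma penalizedDist_conv_self_le (hp : IsDist p) (hq : IsDist q) :
    penalizedDist p q (conv p p) (conv q q) ≤
      ent (conv (conv p p) (conv q q)) - (ent (conv p p) + ent (conv q q)) / 2 +
        6 / 64 * dRuzsa p q := by
  have hpp := dRuzsa_self_conv_self_le hp hq
  have hqq := dRuzsa_self_conv_self_le hq hp
  rw [dRuzsa_comm q p] at hqq
  rw [penalizedDist, dRuzsa]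
  linarith

variable (hp : IsDist p) (hq : IsDist q) (hP : IsSumKernel p p P) (hR : IsSumKernel q q R)
include hp hq hP hR

lemma IsSumKernel.exists_penalizedDist_le : ∃ z : G × G, penalizedDist p q (P z.1) (R z.2) ≤
    avg (prodDist (conv p p) (conv q q)) (fun z => ent (conv (P z.1) (R z.2))) -
      (ent p + ent q) + (ent (conv p p) + ent (conv q q)) / 2 + 6 / 64 * dRuzsa p q := by
  have ha := hp.conv hp
  have hb := hq.conv hq
  have hPa := hP.avg_ent hp hp
  have hRb := hR.avg_ent hq hq
  have hpP := avg_dRuzsa_self_le ha hP.isDist hp hq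
    (by rw [hP.mix_eq hp]; exact ent_conv_self_add_le hp hq) hPa.ge
  have hqR := avg_dRuzsa_self_le hb hR.isDist hq hp
    (by rw [hR.mix_eq hq]; exact ent_conv_self_add_le hq hp) hRb.ge
  obtain ⟨z, hz⟩ := (ha.prodDist hb).exists_le_avg fun z => penalizedDist p q (P z.1) (R z.2)
  refine ⟨z, hz.trans ?_⟩
  have hexpand : (fun z : G × G => penalizedDist p q (P z.1) (R z.2)) = fun z =>
      ent (conv (P z.1) (R z.2)) - 1 / 2 * (ent (P z.1) + ent (R z.2)) +
        1 / 64 * (dRuzsa p (P z.1) + dRuzsa q (R z.2)) := by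
    funext z
    rw [penalizedDist, dRuzsa]
    ring
  rw [hexpand, avg_add, avg_sub, avg_const_mul, avg_const_mul, avg_add, avg_add,
    avg_prodDist_fst _ (fun u => ent (P u)) hb, avg_prodDist_snd ha _ fun w => ent (R w),
    avg_prodDist_fst _ (fun u => dRuzsa p (P u)) hb,
    avg_prodDist_snd ha _ fun w => dRuzsa q (R w), hPa, hRb]
  rw [dRuzsa_comm q p] at hqR
  simp only [sDouble]
  linarith

lemma IsSumKernel.exists_penalizedDist_conv_le [Module (ZMod 2) G] : ∃ z : G × G,
    penalizedDist p q (conv (P z.1) (R z.2)) (conv (P z.1) (R z.2)) ≤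
      8 * ent (conv p q) - 3 * ent (conv (conv p p) (conv q q)) -
        (ent (conv p p) + ent (conv q q)) -
        3 * avg (prodDist (conv p p) (conv q q)) (fun z => ent (conv (P z.1) (R z.2))) +
        6 / 64 * dRuzsa p q := by
  have ha := hp.conv hp
  have hb := hq.conv hq
  have hab := ha.prodDist hb
  have hQ (z : G × G) : IsDist (conv (P z.1) (R z.2)) := (hP.isDist _).conv (hR.isDist _)
  have hmix := mix_prodDist_conv (conv p p) (conv q q) P R
  rw [hP.mix_eq hp, hR.mix_eq hq] at hmix
  have hpQ := avg_dRuzsa_self_le hab hQ hp hq (hmix ▸ ent_conv_conv_left_add_le hp hq) <| by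
    rw [← hP.avg_ent hp hp, ← avg_prodDist_fst _ (fun u => ent (P u)) hb]
    exact avg_mono hab.1 fun z _ => ent_le_ent_conv_left (hP.isDist _) (hR.isDist _)
  have hqQ := avg_dRuzsa_self_le hab hQ hq hp
      (hmix ▸ conv_comm q p ▸ ent_conv_conv_left_add_le hq hp) <| by
    rw [← hR.avg_ent hq hq, ← avg_prodDist_snd ha _ fun w => ent (R w)]
    exact avg_mono hab.1 fun z _ => ent_le_ent_conv_right (hP.isDist _) (hR.isDist _)
  have hbsg := hP.avg_ent_conv_conv_self_le hR hp hp hq hq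
  obtain ⟨z, hz⟩ := hab.exists_le_avg fun z =>
    penalizedDist p q (conv (P z.1) (R z.2)) (conv (P z.1) (R z.2))
  refine ⟨z, hz.trans ?_⟩
  have hexpand : (fun z : G × G => penalizedDist p q (conv (P z.1) (R z.2))
      (conv (P z.1) (R z.2))) = fun z =>
      ent (conv (conv (P z.1) (R z.2)) (conv (P z.1) (R z.2))) - ent (conv (P z.1) (R z.2)) +
        1 / 64 * (dRuzsa p (conv (P z.1) (R z.2)) + dRuzsa q (conv (P z.1) (R z.2))) := by
    funext z
    rw [penalizedDist, dRuzsa]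
    ring
  rw [hexpand, avg_add, avg_sub, avg_const_mul, avg_add]
  rw [dRuzsa_comm q p] at hqQ
  linarith

omit hP hR

lemma exists_penalizedDist_le_of_two_mul_ent_conv_le [Module (ZMod 2) G]
    (h : 2 * ent (conv p q) ≤ ent (conv p p) + ent (conv q q)) :
    ∃ x y, IsDist x ∧ IsDist y ∧ penalizedDist p q x y ≤ (1 - 2 / 64) * dRuzsa p q := by
  obtain ⟨P, hP⟩ := exists_isSumKernel hp hp
  obtain ⟨R, hR⟩ := exists_isSumKernel hq hq
  by_contra! hno
  have h₁ := hno _ _ (hp.conv hp) (hq.conv hq)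
  obtain ⟨z₂, hz₂⟩ := hP.exists_penalizedDist_le hp hq hR
  have h₂ := hno _ _ (hP.isDist z₂.1) (hR.isDist z₂.2)
  obtain ⟨z₃, hz₃⟩ := hP.exists_penalizedDist_conv_le hp hq hR
  have hQ := (hP.isDist z₃.1).conv (hR.isDist z₃.2)
  have h₃ := hno _ _ hQ hQ
  have hd : dRuzsa p q = ent (conv p q) - ent p / 2 - ent q / 2 := rfl
  have hd_nonneg := dRuzsa_nonneg hp hq
  linarith [penalizedDist_conv_self_le hp hq]

lemma exists_penalizedDist_le [Module (ZMod 2) G] :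
    ∃ x y, IsDist x ∧ IsDist y ∧ penalizedDist p q x y ≤ (1 - 1 / 64) * dRuzsa p q := by
  have hd_nonneg := dRuzsa_nonneg hp hq
  have hself (p : G → ℝ) (hp : IsDist p) :=
    exists_penalizedDist_le_of_two_mul_ent_conv_le hp hp (two_mul _).le
  rcases le_total (2 * ent (conv p q)) (ent (conv p p) + ent (conv q q)) with h | h
  · obtain ⟨x, y, hx, hy, hxy⟩ := exists_penalizedDist_le_of_two_mul_ent_conv_le hp hq h
    exact ⟨x, y, hx, hy, by linarith⟩
  have hle : dRuzsa p p ≤ dRuzsa p q ∨ dRuzsa q q ≤ dRuzsa p q := by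
    simp only [dRuzsa]
    by_contra! hlt
    linarith
  rcases hle with hle | hle
  · obtain ⟨x, y, hx, hy, hxy⟩ := hself p hp
    have := dRuzsa_triangle hq hp hy
    rw [dRuzsa_comm q p] at this
    rw [penalizedDist] at hxy
    exact ⟨x, y, hx, hy, by rw [penalizedDist]; linarith⟩
  · obtain ⟨x, y, hx, hy, hxy⟩ := hself q hq
    have := dRuzsa_triangle hp hq hx
    rw [penalizedDist] at hxy
    exact ⟨x, y, hx, hy, by rw [penalizedDist]; linarith⟩

end Improvement

section Minimizer

variable {G : Type*} [AddCommGroup G] [Finite G] {p q x y : G → ℝ}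

lemma continuous_dRuzsa : Continuous fun z : (G → ℝ) × (G → ℝ) => dRuzsa z.1 z.2 := by
  have := Fintype.ofFinite G
  have hent : Continuous fun p : G → ℝ => ent p :=
    (show Continuous fun p : G → ℝ => ∑ a, negMulLog (p a) by fun_prop).congr
      fun p => (ent_eq_sum p).symm
  have hconv : Continuous fun z : (G → ℝ) × (G → ℝ) => conv z.1 z.2 := by
    refine continuous_pi fun w => ?_
    simp only [conv, finsum_eq_sum_of_fintype]
    fun_prop
  simp only [dRuzsa]
  fun_prop

lemma exists_dRuzsa_nonpos [Module (ZMod 2) G] (hp : IsDist p) (hq : IsDist q) :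
    ∃ x y, IsDist x ∧ IsDist y ∧ dRuzsa x y ≤ 0 ∧
      dRuzsa p x + dRuzsa q y ≤ 66 * dRuzsa p q := by
  have := Fintype.ofFinite G
  have hd := continuous_dRuzsa (G := G)
  have hcont : Continuous fun z : (G → ℝ) × (G → ℝ) => penalizedDist p q z.1 z.2 :=
    hd.add (continuous_const.mul ((hd.comp (continuous_const.prodMk continuous_fst)).add
      (hd.comp (continuous_const.prodMk continuous_snd))))
  obtain ⟨⟨x, y⟩, ⟨hx, hy⟩, hmin⟩ :=
    ((isCompact_stdSimplex ℝ G).prod (isCompact_stdSimplex ℝ G)).exists_isMinOn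
      ⟨(q, p), isDist_iff_mem_stdSimplex.1 hq, isDist_iff_mem_stdSimplex.1 hp⟩ hcont.continuousOn
  simp only [← isDist_iff_mem_stdSimplex] at hx hy
  have hle {x' y' : G → ℝ} (hx' : IsDist x') (hy' : IsDist y') :
      penalizedDist p q x y ≤ penalizedDist p q x' y' :=
    isMinOn_iff.1 hmin (x', y') ⟨isDist_iff_mem_stdSimplex.1 hx', isDist_iff_mem_stdSimplex.1 hy'⟩
  simp only [penalizedDist] at hle
  refine ⟨x, y, hx, hy, ?_, ?_⟩
  · obtain ⟨x', y', hx', hy', h⟩ := exists_penalizedDist_le hx hy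
    rw [penalizedDist] at h
    linarith [hle hx' hy', dRuzsa_triangle hp hx hx', dRuzsa_triangle hq hy hy']
  · have h := hle hq hp
    rw [dRuzsa_comm q p] at h
    linarith [dRuzsa_nonneg hx hy]

instance {R M : Type*} [Ring R] [AddCommGroup M] [Module R M] [Finite M] (V : Submodule R M) :
    Finite (M ⧸ V) :=
  Finite.of_surjective _ V.mkQ_surjective

/-- The group of periods of `x`, which supplies the subspace in the entropic Freiman–Ruzsa
theorem. -/
def periods (x : G → ℝ) : AddSubgroup G where
  carrier := {v | Function.Periodic x v}
  add_mem' := Function.Periodic.add_period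
  zero_mem' z := by rw [add_zero]
  neg_mem' := Function.Periodic.neg

lemma IsDist.log_le_ent {A : Type*} [Finite A] {p : A → ℝ} (hp : IsDist p) {N : ℝ} (hN : 0 < N)
    (h : ∀ a, p a * N ≤ 1) : log N ≤ ent p := by
  rw [ent_eq_avg, ← hp.avg_const (log N)]
  refine avg_mono hp.1 fun a ha => ?_
  have hlog := log_nonpos (mul_nonneg (hp.1 a) hN.le) (h a)
  rw [log_mul ha hN.ne'] at hlog
  linarith

lemma IsDist.log_card_periods_le (hx : IsDist x) : log (Nat.card (periods x)) ≤ ent x := by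
  have := Fintype.ofFinite G
  have := Fintype.ofFinite (periods x)
  refine hx.log_le_ent (Nat.cast_pos.2 Nat.card_pos) fun z => ?_
  have hinj : Function.Injective fun v : periods x => z + (v : G) :=
    (add_right_injective z).comp Subtype.val_injective
  calc x z * Nat.card (periods x) = ∑ v : periods x, x (z + v) := by
        simp only [show ∀ v : periods x, x (z + v) = x z from fun v => v.2 z, Finset.sum_const,
          Finset.card_univ, Nat.card_eq_fintype_card, nsmul_eq_mul, mul_comm]
    _ = ∑ w ∈ Finset.univ.map ⟨_, hinj⟩, x w :=
        (Finset.sum_map Finset.univ ⟨_, hinj⟩ x).symm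
    _ ≤ ∑ w, x w := Finset.sum_le_univ_sum_of_nonneg hx.1
    _ = 1 := hx.sum_eq_one

/-- Equality in Jensen's inequality forces the translates of `x` by the support of `y` to agree. -/
lemma sub_mem_periods (hx : IsDist x) (hy : IsDist y) (h : ent (conv y x) ≤ ent x) {b b' : G}
    (hb : y b ≠ 0) (hb' : y b' ≠ 0) : b - b' ∈ periods x := by
  have := Fintype.ofFinite G
  have hjensen (z : G) : ∑ c, y c • negMulLog (x (z - c)) ≤ negMulLog (∑ c, y c • x (z - c)) :=
    concaveOn_negMulLog.le_map_sum (fun c _ => hy.1 c) hy.sum_eq_one fun c _ => hx.1 _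
  have htotal : ∑ z, ∑ c, y c • negMulLog (x (z - c)) = ent x := by
    have htranslate (c : G) : ∑ z, negMulLog (x (z - c)) = ent x := by
      rw [ent_eq_sum]
      exact (Equiv.subRight c).sum_comp fun z => negMulLog (x z)
    rw [Finset.sum_comm]
    simp only [smul_eq_mul, ← Finset.mul_sum, htranslate, ← Finset.sum_mul, hy.sum_eq_one, one_mul]
  have hconv : ∑ z, negMulLog (∑ c, y c • x (z - c)) = ent (conv y x) := by
    simp only [ent_eq_sum, conv, finsum_eq_sum_of_fintype, smul_eq_mul]
  have heq := (Finset.sum_eq_sum_iff_of_le fun z _ => hjensen z).1 <|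
    (Finset.sum_le_sum fun z _ => hjensen z).antisymm (by rwa [htotal, hconv])
  have htranslates (z : G) : x (z - b) = x (z - b') :=
    (strictConcaveOn_negMulLog.map_sum_eq_iff_of_nonneg (fun c _ => hy.1 c) hy.sum_eq_one
      fun c _ => hx.1 _).1 (heq z (Finset.mem_univ z)).symm (Finset.mem_univ b) hb
      (Finset.mem_univ b') hb'
  intro z
  rw [← add_sub_assoc, ← htranslates, add_sub_cancel_right]

/-- A weak form of the entropic polynomial Freiman–Ruzsa theorem of Gowers, Green, Manners and
Tao. -/
theorem exists_submodule_ent_push_mkQ_le_dRuzsa [Module (ZMod 2) G] (hp : IsDist p)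
    (hq : IsDist q) : ∃ V : Submodule (ZMod 2) G,
      log (Nat.card V) ≤ ent q + 132 * dRuzsa p q ∧
      ent (push V.mkQ p) + ent (push V.mkQ q) ≤ 266 * dRuzsa p q := by
  obtain ⟨x, y, hx, hy, hxy, hdist⟩ := exists_dRuzsa_nonpos hp hq
  have hx_le := ent_le_ent_conv_left hx hy
  have hy_le := ent_le_ent_conv_right hx hy
  rw [dRuzsa] at hxy
  have := dRuzsa_nonneg hp hx
  have := dRuzsa_nonneg hq hy
  set V := AddSubgroup.toZModSubmodule 2 (periods x)
  refine ⟨V, ?_, ?_⟩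
  · have hcard : log (Nat.card V) ≤ ent x := hx.log_card_periods_le
    have := ent_le_ent_add_two_mul_dRuzsa hy hq
    rw [dRuzsa_comm] at this
    linarith
  · obtain ⟨b, hb⟩ := hy.exists_ne_zero
    have hyV : ent (push V.mkQ y) = 0 := hy.ent_push_eq_zero fun c hc =>
      (Submodule.Quotient.eq V).2 (sub_mem_periods hx hy (by rw [conv_comm]; linarith) hc hb)
    have := ent_le_ent_add_two_mul_dRuzsa (hq.push V.mkQ) (hy.push V.mkQ)
    have := dRuzsa_push_le V.mkQ hq hy
    have := ent_le_ent_add_two_mul_dRuzsa (hp.push V.mkQ) (hq.push V.mkQ)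
    have := dRuzsa_push_le V.mkQ hp hq
    linarith

end Minimizer

section Quotient

variable {R G H F : Type*} [AddCommGroup G] [Finite G] [AddCommGroup H] [Finite H]
  [FunLike F G H] [AddMonoidHomClass F G H] {p q : G → ℝ}

lemma sDouble_comm (p q : G → ℝ) : sDouble p q = sDouble q p := by
  rw [sDouble, sDouble, conv_comm, add_comm (ent p)]

lemma sDouble_le_left (hp : IsDist p) (hq : IsDist q) : sDouble p q ≤ ent p := by
  rw [sDouble]
  linarith [ent_le_ent_conv_right hp hq]

lemma sDouble_le_right (hp : IsDist p) (hq : IsDist q) : sDouble p q ≤ ent q :=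
  sDouble_comm q p ▸ sDouble_le_left hq hp

lemma sDouble_le_sDouble_push_add_right (φ : F) (hp : IsDist p) (hq : IsDist q) :
    sDouble p q ≤ sDouble (push φ p) (push φ q) + (ent q - ent (push φ q)) := by
  simp only [sDouble]
  linarith [ent_add_ent_conv_push_le φ hp hq]

lemma sDouble_le_sDouble_push_add_left (φ : F) (hp : IsDist p) (hq : IsDist q) :
    sDouble p q ≤ sDouble (push φ p) (push φ q) + (ent p - ent (push φ p)) := by
  rw [sDouble_comm p, sDouble_comm (push φ p)]
  exact sDouble_le_sDouble_push_add_right φ hq hp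

variable [Ring R] [Module R G] (V : Submodule R G) (W : Submodule R (G ⧸ V))

lemma log_card_comap_mkQ_le :
    log (Nat.card (W.comap V.mkQ)) ≤ log (Nat.card V) + log (Nat.card W) := by
  rw [← log_mul (Nat.cast_ne_zero.2 Nat.card_pos.ne') (Nat.cast_ne_zero.2 Nat.card_pos.ne'),
    ← Nat.cast_mul, ← Nat.card_prod]
  refine log_le_log (Nat.cast_pos.2 Nat.card_pos) (Nat.cast_le.2 ?_)
  obtain ⟨σ, hσ⟩ := V.mkQ_surjective.hasRightInverse
  refine Nat.card_le_card_of_injective (fun v : W.comap V.mkQ =>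
    ((⟨v - σ (V.mkQ v), (Submodule.Quotient.eq V).1 (hσ (V.mkQ v)).symm⟩ : V),
      (⟨V.mkQ v, v.2⟩ : W))) fun v w h => Subtype.ext ?_
  simp only [Prod.mk.injEq, Subtype.mk.injEq] at h
  exact sub_left_injective (h.2 ▸ h.1)

lemma ent_push_mkQ_comap (hp : IsDist p) :
    ent (push (W.comap V.mkQ).mkQ p) = ent (push W.mkQ (push V.mkQ p)) := by
  rw [push_push]
  refine ent_push_congr hp.1 fun v w => ?_
  simp only [Function.comp_apply, Submodule.mkQ_apply, Submodule.Quotient.eq,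
    Submodule.mem_comap, map_sub]

omit [Finite G] V W in
lemma exists_submodule_of_decrement {good : Submodule R G → Prop} {Φ : Submodule R G → ℝ} {N : ℕ}
    {M δ : ℝ} (hM : 0 ≤ M) (hbot : Φ ⊥ ≤ N * δ) (hgood : ∀ V, Φ V ≤ 0 → good V)
    (hstep : ∀ V, ¬good V →
      ∃ V' : Submodule R G, log (Nat.card V') ≤ log (Nat.card V) + M ∧ Φ V' ≤ Φ V - δ) :
    ∃ V : Submodule R G, log (Nat.card V) ≤ N * M ∧ good V := by
  have hiterate (n : ℕ) : ∃ V : Submodule R G,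
      log (Nat.card V) ≤ n * M ∧ (good V ∨ Φ V ≤ N * δ - n * δ) := by
    induction n with
    | zero => exact ⟨⊥, by simp, Or.inr (by simpa using hbot)⟩
    | succ n ih =>
      obtain ⟨V, hV, hgoodV | hΦ⟩ := ih
      · exact ⟨V, by push_cast; linarith, Or.inl hgoodV⟩
      by_cases hgoodV : good V
      · exact ⟨V, by push_cast; linarith, Or.inl hgoodV⟩
      obtain ⟨V', hV', hΦ'⟩ := hstep V hgoodV
      exact ⟨V', by push_cast; linarith, Or.inr (by push_cast; linarith)⟩
  obtain ⟨V, hV, hV'⟩ := hiterate N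
  exact ⟨V, hV, hV'.elim id fun hΦ => hgood V (by linarith)⟩

end Quotient

section Reduction

universe u

variable {G : Type u} [AddCommGroup G] [Module (ZMod 2) G] {p q : G → ℝ} {L L' c c' η η' β : ℝ}

/-- `EntropyReducible p q L c` is the conclusion of the paper's statement `A(η, L, c)`: passing to
the quotient by a subspace with at most `exp (L * (ent p + ent q))` elements removes a proportion
`c` of the total entropy of `p` and `q`. -/
def EntropyReducible (p q : G → ℝ) (L c : ℝ) : Prop :=
  ∃ V : Submodule (ZMod 2) G, log (Nat.card V) ≤ L * (ent p + ent q) ∧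
    ent (push V.mkQ p) + ent (push V.mkQ q) ≤ (1 - c) * (ent p + ent q)

lemma EntropyReducible.symm (h : EntropyReducible p q L c) : EntropyReducible q p L c := by
  simp only [EntropyReducible, add_comm (ent q), add_comm (ent (push _ q))]
  exact h

/-- The paper's statement `A(η, L, c)` for some `L` and `c`, over all finite `𝔽₂`-vector spaces
so that it can be applied to quotients. -/
def ReductionProperty (η : ℝ) : Prop :=
  ∃ L c : ℝ, 0 ≤ L ∧ 0 < c ∧
    ∀ ⦃G : Type u⦄ [AddCommGroup G] [Module (ZMod 2) G] [Finite G] ⦃p q : G → ℝ⦄,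
      IsDist p → IsDist q → η * (ent p + ent q) ≤ sDouble p q → EntropyReducible p q L c

/-- The paper's statement `B(η, ε, L)` for every `ε > 0` and some `L = L(ε)`, over all finite
`𝔽₂`-vector spaces. -/
def RegularityProperty (η : ℝ) : Prop :=
  ∀ ε : ℝ, 0 < ε → ∃ L : ℝ, 0 ≤ L ∧
    ∀ ⦃G : Type u⦄ [AddCommGroup G] [Module (ZMod 2) G] [Finite G] ⦃p q : G → ℝ⦄,
      IsDist p → IsDist q → ∃ V : Submodule (ZMod 2) G,
        log (Nat.card V) ≤ L * (ent p + ent q) ∧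
        sDouble (push V.mkQ p) (push V.mkQ q) ≤
          η * (ent (push V.mkQ p) + ent (push V.mkQ q)) + ε * (ent p + ent q)

variable [Finite G] (hp : IsDist p) (hq : IsDist q)
include hp hq

lemma EntropyReducible.mono (h : EntropyReducible p q L c) (hL : L ≤ L') (hc : c' ≤ c) :
    EntropyReducible p q L' c' := by
  obtain ⟨V, hV, hpq⟩ := h
  have hT := add_nonneg hp.ent_nonneg hq.ent_nonneg
  exact ⟨V, hV.trans (by gcongr), hpq.trans (by gcongr)⟩

lemma EntropyReducible.of_push {V : Submodule (ZMod 2) G}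
    (h : EntropyReducible (push V.mkQ p) (push V.mkQ q) L c)
    (hV : log (Nat.card V) ≤ L' * (ent p + ent q)) (hL : 0 ≤ L) (hc : c ≤ 1) :
    EntropyReducible p q (L' + L) c := by
  obtain ⟨W, hW, hpq⟩ := h
  have hle : ent (push V.mkQ p) + ent (push V.mkQ q) ≤ ent p + ent q :=
    add_le_add (ent_push_le hp.1 _) (ent_push_le hq.1 _)
  refine ⟨W.comap V.mkQ, ?_, ?_⟩
  · have := mul_le_mul_of_nonneg_left hle hL
    linarith [log_card_comap_mkQ_le V W]
  · rw [ent_push_mkQ_comap V W hp, ent_push_mkQ_comap V W hq]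
    exact hpq.trans (mul_le_mul_of_nonneg_left hle (by linarith))

omit hp hq

lemma ReductionProperty.mono (h : ReductionProperty.{u} η) (hη : η ≤ η') :
    ReductionProperty.{u} η' := by
  obtain ⟨L, c, hL, hc, hred⟩ := h
  refine ⟨L, c, hL, hc, fun G _ _ _ p q hp hq hs => hred hp hq (le_trans ?_ hs)⟩
  have := add_nonneg hp.ent_nonneg hq.ent_nonneg
  gcongr

lemma reductionProperty_base : ReductionProperty.{u} (1 / 2 - 1 / 600) := by
  refine ⟨133, 1 / 2, by norm_num, by norm_num, fun G _ _ _ p q hp hq hs => ?_⟩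
  obtain ⟨V, hcard, hpq⟩ := exists_submodule_ent_push_mkQ_le_dRuzsa hp hq
  have := hp.ent_nonneg
  have := hq.ent_nonneg
  rw [sDouble] at hs
  rw [dRuzsa] at hcard hpq
  exact ⟨V, by linarith, by linarith⟩

lemma ReductionProperty.regularityProperty (hβ : 0 ≤ β) (h : ReductionProperty.{u} β) :
    RegularityProperty.{u} β := by
  obtain ⟨L, c, hL, hc, hred⟩ := h
  intro ε hε
  obtain ⟨N, hN⟩ := exists_nat_ge (1 / (c * ε))
  refine ⟨N * L, by positivity, fun G _ _ _ p q hp hq => ?_⟩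
  set T := ent p + ent q
  have hT_nonneg : 0 ≤ T := add_nonneg hp.ent_nonneg hq.ent_nonneg
  have hle (V : Submodule (ZMod 2) G) : ent (push V.mkQ p) + ent (push V.mkQ q) ≤ T :=
    add_le_add (ent_push_le hp.1 _) (ent_push_le hq.1 _)
  have hs_le (V : Submodule (ZMod 2) G) :
      sDouble (push V.mkQ p) (push V.mkQ q) ≤ ent (push V.mkQ p) + ent (push V.mkQ q) :=
    (sDouble_le_left (hp.push _) (hq.push _)).trans
      (le_add_of_nonneg_right (hq.push V.mkQ).ent_nonneg)
  have hnonneg (V : Submodule (ZMod 2) G) :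
      0 ≤ β * (ent (push V.mkQ p) + ent (push V.mkQ q)) :=
    mul_nonneg hβ (add_nonneg (hp.push V.mkQ).ent_nonneg (hq.push V.mkQ).ent_nonneg)
  rw [mul_assoc]
  refine exists_submodule_of_decrement (δ := c * (ε * T))
    (Φ := fun V => ent (push V.mkQ p) + ent (push V.mkQ q)) (by positivity) ?_
    (fun V hV => (hs_le V).trans (hV.trans (add_nonneg (hnonneg V) (by positivity)))) ?_
  · rw [div_le_iff₀ (by positivity)] at hN
    linarith [hle ⊥, mul_le_mul_of_nonneg_right hN hT_nonneg]
  · intro V hV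
    rw [not_le] at hV
    obtain ⟨W, hW, hpq⟩ := hred (hp.push V.mkQ) (hq.push V.mkQ)
      ((le_add_of_nonneg_right (by positivity)).trans hV.le)
    have hLT := mul_le_mul_of_nonneg_left (hle V) hL
    have hεT : ε * T ≤ ent (push V.mkQ p) + ent (push V.mkQ q) := by
      linarith [hs_le V, hnonneg V]
    refine ⟨W.comap V.mkQ, by linarith [log_card_comap_mkQ_le V W], ?_⟩
    rw [ent_push_mkQ_comap V W hp, ent_push_mkQ_comap V W hq]
    linarith [mul_le_mul_of_nonneg_left hεT hc.le]

end Reduction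

section ConditionalReduction

universe u

variable {G B : Type*} [AddCommGroup G] [Finite G] [Finite B] {b : B → ℝ} {P : B → G → ℝ}
  {x : G → ℝ} {β : ℝ}

lemma IsDist.avg_sDouble_le_left (hb : IsDist b) (hP : ∀ w, IsDist (P w)) (hx : IsDist x) :
    avg b (fun w => sDouble x (P w)) ≤ ent x := by
  rw [← hb.avg_const (ent x)]
  exact avg_mono hb.1 fun w _ => sDouble_le_left hx (hP w)

lemma IsDist.avg_sDouble_le_right (hb : IsDist b) (hP : ∀ w, IsDist (P w)) (hx : IsDist x) :
    avg b (fun w => sDouble x (P w)) ≤ avg b fun w => ent (P w) :=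
  avg_mono hb.1 fun w _ => sDouble_le_right hx (hP w)

omit [AddCommGroup G] in
lemma IsDist.avg_ent_nonneg (hb : IsDist b) (hP : ∀ w, IsDist (P w)) :
    0 ≤ avg b fun w => ent (P w) := by
  rw [← hb.avg_const 0]
  exact avg_mono hb.1 fun w _ => (hP w).ent_nonneg

omit [AddCommGroup G] in
lemma IsDist.avg_ent_push_le {H : Type*} [Finite H] (hb : IsDist b) (hP : ∀ w, IsDist (P w))
    (φ : G → H) : avg b (fun w => ent (push φ (P w))) ≤ avg b fun w => ent (P w) :=
  avg_mono hb.1 fun w _ => ent_push_le (hP w).1 φ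

lemma IsDist.avg_sDouble_le_push {H F : Type*} [AddCommGroup H] [Finite H] [FunLike F G H]
    [AddMonoidHomClass F G H] (hb : IsDist b) (hP : ∀ w, IsDist (P w)) (hx : IsDist x) (φ : F) :
    avg b (fun w => sDouble x (P w)) ≤ avg b (fun w => sDouble (push φ x) (push φ (P w))) +
      (avg b (fun w => ent (P w)) - avg b fun w => ent (push φ (P w))) := by
  rw [← avg_sub, ← avg_add]
  exact avg_mono hb.1 fun w _ => sDouble_le_sDouble_push_add_right φ hx (hP w)

lemma RegularityProperty.exists_ent_push_le_sub (h : RegularityProperty.{u} β) (hβ : 0 < β)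
    {g K : ℝ} (hg : 0 < g) (hK : 0 < K) : ∃ L : ℝ, 0 ≤ L ∧
      ∀ ⦃G B : Type u⦄ [AddCommGroup G] [Module (ZMod 2) G] [Finite G] [Finite B]
        ⦃b : B → ℝ⦄ ⦃P : B → G → ℝ⦄ ⦃x : G → ℝ⦄ ⦃T : ℝ⦄,
        IsDist b → (∀ w, IsDist (P w)) → IsDist x → 0 ≤ T → ent x ≤ K * T →
        β * (ent x + avg b fun w => ent (P w)) + g * T ≤ avg b (fun w => sDouble x (P w)) →
        ∃ V : Submodule (ZMod 2) G, log (Nat.card V) ≤ L * T ∧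
          ent (push V.mkQ x) ≤ ent x - g / 2 * T := by
  set K' := (1 + 1 / β) * K
  have hK'_pos : 0 < K' := by positivity
  obtain ⟨L, hL, hreg⟩ := h (g / (2 * K')) (by positivity)
  refine ⟨L * K', by positivity, fun G B _ _ _ _ b P x T hb hP hx hT hxT hs => ?_⟩
  obtain ⟨w, hw⟩ := hb.exists_avg_le fun w => sDouble x (P w) - β * (ent x + ent (P w))
  rw [avg_sub, avg_const_mul, avg_add, hb.avg_const] at hw
  have hx_nonneg := hx.ent_nonneg
  have hgT : 0 ≤ g * T := by positivity
  have hsum : ent x + ent (P w) ≤ K' * T := by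
    have hPw : ent (P w) ≤ 1 / β * ent x := by
      rw [one_div, ← div_eq_inv_mul, le_div_iff₀ hβ]
      linarith [sDouble_le_left hx (hP w), mul_nonneg hβ.le hx_nonneg]
    calc ent x + ent (P w) ≤ (1 + 1 / β) * ent x := by linarith
      _ ≤ (1 + 1 / β) * (K * T) := by gcongr
      _ = K' * T := (mul_assoc _ _ _).symm
  obtain ⟨V, hV, hsV⟩ := hreg hx (hP w)
  refine ⟨V, hV.trans ?_, ?_⟩
  · rw [mul_assoc]
    gcongr
  · have herror : g / (2 * K') * (ent x + ent (P w)) ≤ g / 2 * T :=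
      (mul_le_mul_of_nonneg_left hsum (by positivity)).trans_eq (by field_simp)
    have hle : ent (push V.mkQ x) + ent (push V.mkQ (P w)) ≤ ent x + ent (P w) :=
      add_le_add (ent_push_le hx.1 _) (ent_push_le (hP w).1 _)
    linarith [sDouble_le_sDouble_push_add_left V.mkQ hx (hP w),
      mul_le_mul_of_nonneg_left hle hβ.le]

lemma RegularityProperty.exists_le_avg_ent_sub (h : RegularityProperty.{u} β) (hβ : 0 < β)
    {g K : ℝ} (hg : 0 < g) (hK : 0 < K) : ∃ L : ℝ, 0 ≤ L ∧
      ∀ ⦃G B : Type u⦄ [AddCommGroup G] [Module (ZMod 2) G] [Finite G] [Finite B]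
        ⦃b : B → ℝ⦄ ⦃P : B → G → ℝ⦄ ⦃x : G → ℝ⦄ ⦃T θ : ℝ⦄,
        IsDist b → (∀ w, IsDist (P w)) → IsDist x → 0 ≤ T → ent x ≤ K * T →
        β * (ent x + avg b fun w => ent (P w)) + g * T + θ ≤ avg b (fun w => sDouble x (P w)) →
        ∃ V : Submodule (ZMod 2) G, log (Nat.card V) ≤ L * T ∧
          θ ≤ avg b (fun w => ent (P w)) - avg b fun w => ent (push V.mkQ (P w)) := by
  obtain ⟨L, hL, hstep⟩ := h.exists_ent_push_le_sub hβ hg hK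
  obtain ⟨N, hN⟩ := exists_nat_ge (2 * K / g)
  refine ⟨N * L, by positivity, fun G B _ _ _ _ b P x T θ hb hP hx hT hxT hs => ?_⟩
  have hlarge (V : Submodule (ZMod 2) G)
      (hV : ¬θ ≤ avg b (fun w => ent (P w)) - avg b fun w => ent (push V.mkQ (P w))) :
      β * (ent (push V.mkQ x) + avg b fun w => ent (push V.mkQ (P w))) + g * T <
        avg b fun w => sDouble (push V.mkQ x) (push V.mkQ (P w)) := by
    have hle := add_le_add (ent_push_le hx.1 V.mkQ) (hb.avg_ent_push_le hP V.mkQ)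
    linarith [hb.avg_sDouble_le_push hP hx V.mkQ, mul_le_mul_of_nonneg_left hle hβ.le]
  rw [mul_assoc]
  refine exists_submodule_of_decrement (δ := g / 2 * T) (Φ := fun V => ent (push V.mkQ x))
    (by positivity) ?_ (fun V hV => ?_) fun V hV => ?_
  · rw [div_le_iff₀ hg] at hN
    linarith [ent_push_le hx.1 (⊥ : Submodule (ZMod 2) G).mkQ, mul_le_mul_of_nonneg_right hN hT]
  · by_contra hθ
    have hPV (w : B) := (hP w).push V.mkQ
    have hxV := hx.push V.mkQ
    have := mul_nonneg hβ.le (add_nonneg hxV.ent_nonneg (hb.avg_ent_nonneg hPV))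
    linarith [hlarge V hθ, hb.avg_sDouble_le_left hPV hxV, mul_nonneg hg.le hT]
  · obtain ⟨W, hW, hxW⟩ := hstep hb (fun w => (hP w).push V.mkQ) (hx.push V.mkQ) hT
      ((ent_push_le hx.1 _).trans hxT) (hlarge V hV).le
    exact ⟨W.comap V.mkQ, by linarith [log_card_comap_mkQ_le V W],
      (ent_push_mkQ_comap V W hx).trans_le hxW⟩

lemma EntropyReducible.of_le_avg_ent_sub [Module (ZMod 2) G] {p q : G → ℝ} (hp : IsDist p)
    (hb : IsDist b) (hP : ∀ w, IsDist (P w)) (hmix : mix b P = q) {V : Submodule (ZMod 2) G}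
    {L c : ℝ} (hV : log (Nat.card V) ≤ L * (ent p + ent q))
    (h : c * (ent p + ent q) ≤
      avg b (fun w => ent (P w)) - avg b fun w => ent (push V.mkQ (P w))) :
    EntropyReducible p q L c := by
  have hdrop := hb.avg_ent_sub_push_le hP V.mkQ
  rw [hmix, avg_sub] at hdrop
  exact ⟨V, hV, by linarith [ent_push_le hp.1 V.mkQ]⟩

end ConditionalReduction

section Bootstrap

universe u

variable {β κ : ℝ}

/-- The amount, up to a constant factor, by which the exponent `β` of a `ReductionProperty` can be
lowered; `1 / 100` stands for any small enough constant. -/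
def bootstrapGain (β : ℝ) : ℝ :=
  β ^ 2 * (1 - 2 * β) / 100

lemma bootstrapGain_pos (hβ : 0 < β) (hβ' : β < 1 / 2) : 0 < bootstrapGain β :=
  div_pos (mul_pos (pow_pos hβ 2) (by linarith)) (by norm_num)

lemma bootstrapGain_lt_self (hβ : 0 < β) (hβ' : β < 1 / 2) : bootstrapGain β < β := by
  have : β * (β * (1 - 2 * β)) ≤ β * (1 * 1) := by gcongr <;> linarith
  rw [bootstrapGain]
  linarith

lemma IsSumKernel.avg_avg_sDouble {G : Type*} [AddCommGroup G] [Finite G] {p q : G → ℝ}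
    {P R : G → G → ℝ} (hp : IsDist p) (hq : IsDist q) (hP : IsSumKernel p p P)
    (hR : IsSumKernel q q R) :
    avg (conv p p) (fun u => avg (conv q q) fun w => sDouble (P u) (R w)) =
      2 * (ent p + ent q) - (ent (conv p p) + ent (conv q q)) -
        avg (prodDist (conv p p) (conv q q)) fun z => ent (conv (P z.1) (R z.2)) := by
  have havg := avg_compProd (conv p p) (fun _ => conv q q) fun z => sDouble (P z.1) (R z.2)
  rw [← havg, ← prodDist_eq_compProd]
  simp only [sDouble]
  rw [avg_sub, avg_add, avg_prodDist_fst _ (fun u => ent (P u)) (hq.conv hq),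
    avg_prodDist_snd (hp.conv hp) _ fun w => ent (R w), hP.avg_ent hp hp, hR.avg_ent hq hq]
  simp only [sDouble]
  ring

lemma IsSumKernel.avg_ent_le {G : Type*} [AddCommGroup G] [Finite G] {p q : G → ℝ}
    {P : G → G → ℝ} (hP : IsSumKernel p q P) (hp : IsDist p) (hq : IsDist q) :
    avg (conv p q) (fun u => ent (P u)) ≤ ent q :=
  (hP.avg_ent hp hq).trans_le (sDouble_le_right hp hq)

lemma RegularityProperty.exists_entropyReducible_of_le_avg_sDouble
    (h : RegularityProperty.{u} β) (hβ : 0 < β) (hκ : 0 < κ) : ∃ L : ℝ, 0 ≤ L ∧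
      ∀ ⦃G : Type u⦄ [AddCommGroup G] [Module (ZMod 2) G] [Finite G] ⦃p q : G → ℝ⦄
        ⦃P R : G → G → ℝ⦄, IsDist p → IsDist q → IsSumKernel p p P → IsSumKernel q q R →
        β * (2 * (ent p + ent q) - (ent (conv p p) + ent (conv q q))) + κ * (ent p + ent q) ≤
          avg (conv p p) (fun u => avg (conv q q) fun w => sDouble (P u) (R w)) →
        EntropyReducible p q L (κ / 2) := by
  obtain ⟨L, hL, hreg⟩ := h.exists_le_avg_ent_sub hβ (half_pos hκ) (one_div_pos.2 hβ)
  refine ⟨L, hL, fun G _ _ _ p q P R hp hq hP hR hs => ?_⟩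
  have ha := hp.conv hp
  have hb := hq.conv hq
  have hT_nonneg := add_nonneg hp.ent_nonneg hq.ent_nonneg
  obtain ⟨u, hu⟩ := ha.exists_avg_le fun u => (avg (conv q q) fun w => sDouble (P u) (R w)) -
    β * (ent (P u) + avg (conv q q) fun w => ent (R w))
  rw [avg_sub, avg_const_mul, avg_add, ha.avg_const] at hu
  have hsum : (avg (conv p p) fun u => ent (P u)) + (avg (conv q q) fun w => ent (R w)) =
      2 * (ent p + ent q) - (ent (conv p p) + ent (conv q q)) := by
    rw [hP.avg_ent hp hp, hR.avg_ent hq hq, sDouble, sDouble]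
    ring
  rw [hsum] at hu
  have hPu : ent (P u) ≤ 1 / β * (ent p + ent q) := by
    rw [one_div, ← div_eq_inv_mul, le_div_iff₀ hβ]
    have := hb.avg_sDouble_le_right hR.isDist (hP.isDist u)
    have := mul_nonneg hβ.le (hb.avg_ent_nonneg hR.isDist)
    have := mul_nonneg hκ.le hT_nonneg
    linarith [hR.avg_ent_le hq hq, hp.ent_nonneg]
  obtain ⟨V, hV, hdrop⟩ := hreg (θ := κ / 2 * (ent p + ent q)) hb hR.isDist (hP.isDist u)
    hT_nonneg hPu (by linarith)
  exact .of_le_avg_ent_sub hp hb hR.isDist (hR.mix_eq hq) hV hdrop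

lemma RegularityProperty.exists_entropyReducible_of_avg_ent_conv_self_le
    (h : RegularityProperty.{u} β) (hβ : β < 1 / 2) (hκ : 0 < κ) : ∃ L : ℝ, 0 ≤ L ∧
      ∀ ⦃G : Type u⦄ [AddCommGroup G] [Module (ZMod 2) G] [Finite G] ⦃p q : G → ℝ⦄
        ⦃P R : G → G → ℝ⦄, IsDist p → IsDist q → IsSumKernel p p P → IsSumKernel q q R →
        κ / 2 * (ent p + ent q) + 1 / (1 - 2 * β) *
          (avg (prodDist (conv p p) (conv q q))
              (fun z => ent (conv (conv (P z.1) (R z.2)) (conv (P z.1) (R z.2)))) -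
            (1 - 2 * κ) * avg (prodDist (conv p p) (conv q q))
              fun z => ent (conv (P z.1) (R z.2))) ≤
          avg (conv p p) (fun u => avg (conv q q) fun w => sDouble (P u) (R w)) →
        EntropyReducible p q L (κ / 2) := by
  have hγ : 0 < 1 - 2 * β := by linarith
  obtain ⟨L, hL, hreg⟩ := h κ hκ
  refine ⟨L * ((1 - 2 * β) / κ), by positivity, fun G _ _ _ p q P R hp hq hP hR hs => ?_⟩
  have hb := hq.conv hq
  have hT_nonneg := add_nonneg hp.ent_nonneg hq.ent_nonneg
  have hκT := mul_nonneg hκ.le hT_nonneg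
  rw [← avg_prodDist_fst _ (fun u => avg (conv q q) fun w => sDouble (P u) (R w)) hb] at hs
  obtain ⟨⟨u, w⟩, hz⟩ := ((hp.conv hp).prodDist hb).exists_avg_le fun z : G × G =>
    avg (conv q q) (fun w => sDouble (P z.1) (R w)) -
      1 / (1 - 2 * β) * (ent (conv (conv (P z.1) (R z.2)) (conv (P z.1) (R z.2))) -
        (1 - 2 * κ) * ent (conv (P z.1) (R z.2)))
  rw [avg_sub, avg_const_mul, avg_sub, avg_const_mul] at hz
  have hPu := hP.isDist u
  have hQ := hPu.conv (hR.isDist w)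
  set Q := conv (P u) (R w)
  set D := 1 / (1 - 2 * β) * (ent (conv Q Q) - (1 - 2 * κ) * ent Q) with hD
  have : κ / 2 * (ent p + ent q) + D ≤ avg (conv q q) fun w => sDouble (P u) (R w) := by
    linarith
  obtain ⟨V, hV, hsQ⟩ := hreg hQ hQ
  refine .of_le_avg_ent_sub hp hb hR.isDist (hR.mix_eq hq) (hV.trans ?_) ?_
  · have hDT : D ≤ ent p + ent q := by
      linarith [hb.avg_sDouble_le_right hR.isDist hPu, hR.avg_ent_le hq hq, hp.ent_nonneg]
    rw [hD, one_div, inv_mul_le_iff₀ hγ] at hDT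
    rw [mul_assoc, div_mul_eq_mul_div]
    refine mul_le_mul_of_nonneg_left ((le_div_iff₀ hκ).2 ?_) hL
    linarith [ent_le_ent_conv_left hQ hQ]
  · have hPuV : ent (push V.mkQ (P u)) ≤ D := by
      refine ((ent_le_ent_conv_left (hPu.push V.mkQ) ((hR.isDist w).push V.mkQ)).trans_eq
        (by rw [← push_conv])).trans ?_
      rw [hD, one_div, le_inv_mul_iff₀ hγ]
      rw [sDouble] at hsQ
      linarith [ent_add_ent_conv_push_le V.mkQ hQ hQ]
    linarith [hb.avg_sDouble_le_push hR.isDist hPu V.mkQ,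
      hb.avg_sDouble_le_left (fun w => (hR.isDist w).push V.mkQ) (hPu.push V.mkQ)]

lemma IsSumKernel.avg_ent_conv_self_add_le_avg_sDouble {G : Type*} [AddCommGroup G]
    [Module (ZMod 2) G] [Finite G] {p q : G → ℝ} {P R : G → G → ℝ} (hp : IsDist p) (hq : IsDist q)
    (hP : IsSumKernel p p P) (hR : IsSumKernel q q R) (hβ : 0 < β) (hβ' : β < 1 / 2)
    (hfav : 2 * ent (conv p q) ≤ ent (conv p p) + ent (conv q q))
    (hs : (β - bootstrapGain β) * (ent p + ent q) ≤ sDouble p q)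
    (hs₂ : sDouble (conv p p) (conv q q) ≤
      β * (ent (conv p p) + ent (conv q q)) + bootstrapGain β * (ent p + ent q))
    (hmi : 2 * ent (conv p q) -
        avg (prodDist (conv p p) (conv q q)) (fun z => ent (conv (P z.1) (R z.2))) -
        ent (conv (conv p p) (conv q q)) ≤ 4 * (bootstrapGain β * (ent p + ent q))) :
    bootstrapGain β / 2 * (ent p + ent q) + 1 / (1 - 2 * β) *
      (avg (prodDist (conv p p) (conv q q))
          (fun z => ent (conv (conv (P z.1) (R z.2)) (conv (P z.1) (R z.2)))) -
        (1 - 2 * bootstrapGain β) * avg (prodDist (conv p p) (conv q q))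
          fun z => ent (conv (P z.1) (R z.2))) ≤
      avg (conv p p) (fun u => avg (conv q q) fun w => sDouble (P u) (R w)) := by
  set κ := bootstrapGain β with hκ
  rw [bootstrapGain] at hκ
  have hQ (z : G × G) : IsDist (conv (P z.1) (R z.2)) := (hP.isDist _).conv (hR.isDist _)
  have hbsg := hP.avg_ent_conv_conv_self_le hR hp hp hq hq
  set E := avg (prodDist (conv p p) (conv q q)) fun z =>
    ent (conv (conv (P z.1) (R z.2)) (conv (P z.1) (R z.2)))
  have he_le : _ ≤ E :=
    avg_mono ((hp.conv hp).prodDist (hq.conv hq)).1 fun z _ => ent_le_ent_conv_left (hQ z) (hQ z)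
  have hc_nonneg := ((hp.conv hp).conv (hq.conv hq)).ent_nonneg
  have hc_le := ent_conv_le hp hq
  rw [hP.avg_avg_sDouble hp hq hR]
  rw [sDouble] at hs hs₂
  set T := ent p + ent q
  set e := avg (prodDist (conv p p) (conv q q)) fun z => ent (conv (P z.1) (R z.2))
  set A := ent (conv p p) + ent (conv q q)
  have hγ : 0 < 1 - 2 * β := by linarith
  have hκ_pos : 0 < κ := bootstrapGain_pos hβ hβ'
  have hT_nonneg : 0 ≤ T := add_nonneg hp.ent_nonneg hq.ent_nonneg
  have hκT : κ * e ≤ κ * (2 * T) := by gcongr; linarith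
  have hβA : (1 - β) * (2 * ent (conv p q)) ≤ (1 - β) * A := by gcongr; linarith
  have hβc : (1 + β) * ent (conv p q) ≤ (1 + β) * (T - (β - κ) * T) := by gcongr; linarith
  have hβκT : β * (κ * T) ≤ 1 / 2 * (κ * T) := by gcongr
  have hκβ : κ * T ≤ β ^ 2 * T / 100 := by
    have hββ : β ^ 2 * (1 - 2 * β) * T ≤ β ^ 2 * 1 * T := by gcongr; linarith
    rw [hκ]
    linarith
  have hE : 1 / (1 - 2 * β) * (E - (1 - 2 * κ) * e) ≤ 1 / (1 - 2 * β) * (16 * (κ * T)) :=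
    mul_le_mul_of_nonneg_left (by linarith) (by positivity)
  have hκγ : 1 / (1 - 2 * β) * (16 * (κ * T)) = 16 / 100 * (β ^ 2 * T) := by
    rw [hκ]
    field_simp
  linarith

lemma RegularityProperty.exists_entropyReducible_of_two_mul_ent_conv_le
    (h : RegularityProperty.{u} β) (hβ : 0 < β) (hβ' : β < 1 / 2) : ∃ L : ℝ, 0 ≤ L ∧
      ∀ ⦃G : Type u⦄ [AddCommGroup G] [Module (ZMod 2) G] [Finite G] ⦃p q : G → ℝ⦄,
        IsDist p → IsDist q → 2 * ent (conv p q) ≤ ent (conv p p) + ent (conv q q) →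
        (β - bootstrapGain β) * (ent p + ent q) ≤ sDouble p q →
        sDouble (conv p p) (conv q q) ≤
          β * (ent (conv p p) + ent (conv q q)) + bootstrapGain β * (ent p + ent q) →
        EntropyReducible p q L (bootstrapGain β / 2) := by
  have hκ_pos := bootstrapGain_pos hβ hβ'
  obtain ⟨L₁, hL₁, hlarge⟩ := h.exists_entropyReducible_of_le_avg_sDouble hβ hκ_pos
  obtain ⟨L₂, hL₂, hsmall⟩ := h.exists_entropyReducible_of_avg_ent_conv_self_le hβ' hκ_pos
  refine ⟨L₁ + L₂, by positivity, fun G _ _ _ p q hp hq hfav hs hs₂ => ?_⟩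
  obtain ⟨P, hP⟩ := exists_isSumKernel hp hp
  obtain ⟨R, hR⟩ := exists_isSumKernel hq hq
  rcases le_total (2 * ent (conv p q) -
      avg (prodDist (conv p p) (conv q q)) (fun z => ent (conv (P z.1) (R z.2))) -
      ent (conv (conv p p) (conv q q))) (4 * (bootstrapGain β * (ent p + ent q))) with hmi | hmi
  · exact (hsmall hp hq hP hR (hP.avg_ent_conv_self_add_le_avg_sDouble hp hq hR hβ hβ' hfav hs
      hs₂ hmi)).mono hp hq (by linarith) le_rfl
  · refine (hlarge hp hq hP hR ?_).mono hp hq (by linarith) le_rfl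
    rw [hP.avg_avg_sDouble hp hq hR]
    rw [sDouble] at hs hs₂
    linarith

end Bootstrap

section Iteration

universe u

variable {β κ η L c d : ℝ}

lemma EntropyReducible.of_self {G : Type u} [AddCommGroup G] [Module (ZMod 2) G] [Finite G]
    {p q : G → ℝ} (hq : IsDist q) (hL : 0 ≤ L) (hc : 0 ≤ c) (h : EntropyReducible p p L c)
    (hd : d * (ent p + ent q) ≤ ent p) : EntropyReducible p q (2 * L) (c * d) := by
  obtain ⟨V, hV, hp⟩ := h
  refine ⟨V, ?_, ?_⟩
  · linarith [mul_nonneg hL hq.ent_nonneg]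
  · linarith [ent_push_le hq.1 V.mkQ, mul_le_mul_of_nonneg_left hd hc]

lemma RegularityProperty.exists_entropyReducible_of_regularized (h : RegularityProperty.{u} β)
    (hκ : 0 < κ) (hL : 0 ≤ L) (hc : c ≤ 1 / 2) : ∃ L' : ℝ, 0 ≤ L' ∧
      ∀ ⦃G : Type u⦄ [AddCommGroup G] [Module (ZMod 2) G] [Finite G] ⦃p q : G → ℝ⦄,
        IsDist p → IsDist q →
        (∀ V : Submodule (ZMod 2) G,
          sDouble p q - c * (ent p + ent q) ≤ sDouble (push V.mkQ p) (push V.mkQ q) →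
          sDouble (conv (push V.mkQ p) (push V.mkQ p)) (conv (push V.mkQ q) (push V.mkQ q)) ≤
            β * (ent (conv (push V.mkQ p) (push V.mkQ p)) +
              ent (conv (push V.mkQ q) (push V.mkQ q))) +
            κ * (ent (push V.mkQ p) + ent (push V.mkQ q)) →
          EntropyReducible (push V.mkQ p) (push V.mkQ q) L c) →
        EntropyReducible p q L' c := by
  obtain ⟨L₀, hL₀, hreg⟩ := h (κ / 4) (by positivity)
  refine ⟨2 * L₀ + L, by positivity, fun G _ _ _ p q hp hq hred => ?_⟩
  set T := ent p + ent q
  have hT_nonneg : 0 ≤ T := add_nonneg hp.ent_nonneg hq.ent_nonneg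
  have hsum : ent (conv p p) + ent (conv q q) ≤ 2 * T := by
    linarith [ent_conv_le hp hp, ent_conv_le hq hq]
  obtain ⟨V, hV, hs₂⟩ := hreg (hp.conv hp) (hq.conv hq)
  have hV' : log (Nat.card V) ≤ 2 * L₀ * T := by
    linarith [mul_le_mul_of_nonneg_left hsum hL₀]
  rcases le_total (ent (push V.mkQ p) + ent (push V.mkQ q)) ((1 - c) * T) with hdrop | hkeep
  · exact ⟨V, hV'.trans (by gcongr; linarith), hdrop⟩
  refine (hred V ?_ ?_).of_push hp hq hV' hL (by linarith)
  · linarith [sDouble_le_sDouble_push_add_left V.mkQ hp hq, ent_push_le hq.1 V.mkQ]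
  · have hhalf : T ≤ 2 * (ent (push V.mkQ p) + ent (push V.mkQ q)) := by
      linarith [mul_le_mul_of_nonneg_right hc hT_nonneg]
    rw [push_conv, push_conv] at hs₂
    linarith [mul_le_mul_of_nonneg_left hsum hκ.le, mul_le_mul_of_nonneg_left hhalf hκ.le]

lemma RegularityProperty.exists_entropyReducible_self (h : RegularityProperty.{u} β) (hβ : 0 < β)
    (hβ' : β < 1 / 2) : ∃ L : ℝ, 0 ≤ L ∧
      ∀ ⦃G : Type u⦄ [AddCommGroup G] [Module (ZMod 2) G] [Finite G] ⦃p : G → ℝ⦄,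
        IsDist p → (β - bootstrapGain β / 2) * (ent p + ent p) ≤ sDouble p p →
        EntropyReducible p p L (bootstrapGain β / 4) := by
  have hκ_pos := bootstrapGain_pos hβ hβ'
  have hκβ := bootstrapGain_lt_self hβ hβ'
  obtain ⟨L, hL, hcore⟩ := h.exists_entropyReducible_of_two_mul_ent_conv_le hβ hβ'
  set κ := bootstrapGain β
  obtain ⟨L', hL', hred⟩ :=
    h.exists_entropyReducible_of_regularized hκ_pos hL (c := κ / 4) (by linarith)
  refine ⟨L', hL', fun G _ _ _ p hp hs => hred hp hp fun V hs₁ hs₂ => ?_⟩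
  have hV := hp.push V.mkQ
  refine (hcore hV hV (two_mul _).le ?_ hs₂).mono hV hV le_rfl (by linarith)
  have hle : (β - κ) * ent (push V.mkQ p) ≤ (β - κ) * ent p :=
    mul_le_mul_of_nonneg_left (ent_push_le hp.1 _) (by linarith)
  linarith [mul_nonneg hκ_pos.le hp.ent_nonneg]

lemma RegularityProperty.exists_entropyReducible_of_sDouble_conv_self_le
    (h : RegularityProperty.{u} β) (hβ : 0 < β) (hβ' : β < 1 / 2) : ∃ L : ℝ, 0 ≤ L ∧
      ∀ ⦃G : Type u⦄ [AddCommGroup G] [Module (ZMod 2) G] [Finite G] ⦃p q : G → ℝ⦄,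
        IsDist p → IsDist q →
        (β - 3 / 8 * bootstrapGain β) * (ent p + ent q) ≤ sDouble p q →
        sDouble (conv p p) (conv q q) ≤
          β * (ent (conv p p) + ent (conv q q)) + bootstrapGain β * (ent p + ent q) →
        EntropyReducible p q L (bootstrapGain β ^ 2 / 32) := by
  have hκ_pos := bootstrapGain_pos hβ hβ'
  have hκβ := bootstrapGain_lt_self hβ hβ'
  obtain ⟨L₁, hL₁, hcore⟩ := h.exists_entropyReducible_of_two_mul_ent_conv_le hβ hβ'
  obtain ⟨L₂, hL₂, hself⟩ := h.exists_entropyReducible_self hβ hβ'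
  set κ := bootstrapGain β
  refine ⟨L₁ + 2 * L₂, by positivity, fun G _ _ _ p q hp hq hs hs₂ => ?_⟩
  have hκT := mul_nonneg hκ_pos.le (add_nonneg hp.ent_nonneg hq.ent_nonneg)
  have hκ_sq : κ ^ 2 / 32 ≤ κ / 2 := by
    linarith [mul_le_mul_of_nonneg_left (hκβ.trans hβ').le hκ_pos.le]
  rcases le_or_gt (2 * ent (conv p q)) (ent (conv p p) + ent (conv q q)) with hfav | hunfav
  · exact (hcore hp hq hfav (by linarith) hs₂).mono hp hq (by linarith) hκ_sq
  have hred {x y : G → ℝ} (hx : IsDist x) (hy : IsDist y)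
      (hxy : κ / 8 * (ent x + ent y) ≤ sDouble x x - (β - κ / 2) * (ent x + ent x)) :
      EntropyReducible x y (L₁ + 2 * L₂) (κ ^ 2 / 32) := by
    have hx_nonneg : 0 ≤ (β - κ / 2) * ent x := mul_nonneg (by linarith) hx.ent_nonneg
    have := mul_nonneg hκ_pos.le (add_nonneg hx.ent_nonneg hy.ent_nonneg)
    refine ((hself hx (by linarith)).of_self (d := κ / 8) hy hL₂ (by positivity) ?_).mono hx hy
      (by linarith) (by linarith)
    linarith [sDouble_le_left hx hx]
  rcases le_total (κ / 8 * (ent p + ent q)) (sDouble p p - (β - κ / 2) * (ent p + ent p))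
    with hpp | hpp
  · exact hred hp hq hpp
  · refine (hred hq hp ?_).symm
    simp only [sDouble] at hpp hs ⊢
    linarith

lemma ReductionProperty.sub_bootstrapGain (h : ReductionProperty.{u} β) (hβ : 0 < β)
    (hβ' : β < 1 / 2) : ReductionProperty.{u} (β - bootstrapGain β / 4) := by
  have hκ_pos := bootstrapGain_pos hβ hβ'
  have hκβ := bootstrapGain_lt_self hβ hβ'
  have hreg := h.regularityProperty hβ.le
  obtain ⟨L, hL, hbootstrap⟩ := hreg.exists_entropyReducible_of_sDouble_conv_self_le hβ hβ'
  set κ := bootstrapGain β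
  have hκ_sq : κ ^ 2 / 32 ≤ κ / 8 := by
    linarith [mul_le_mul_of_nonneg_left (hκβ.trans hβ').le hκ_pos.le]
  obtain ⟨L', hL', hred⟩ := hreg.exists_entropyReducible_of_regularized hκ_pos hL
    (c := κ ^ 2 / 32) (by linarith)
  refine ⟨L', κ ^ 2 / 32, hL', by positivity, fun G _ _ _ p q hp hq hs =>
    hred hp hq fun V hs₁ hs₂ => hbootstrap (hp.push _) (hq.push _) ?_ hs₂⟩
  have hκT := mul_le_mul_of_nonneg_right hκ_sq (add_nonneg hp.ent_nonneg hq.ent_nonneg)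
  have hle : (β - 3 / 8 * κ) * (ent (push V.mkQ p) + ent (push V.mkQ q)) ≤
      (β - 3 / 8 * κ) * (ent p + ent q) :=
    mul_le_mul_of_nonneg_left (add_le_add (ent_push_le hp.1 _) (ent_push_le hq.1 _))
      (by linarith)
  linarith

lemma reductionProperty_of_pos (hη : 0 < η) : ReductionProperty.{u} η := by
  set δ := η ^ 2 / 120000 with hδ
  have hiterate (n : ℕ) : ReductionProperty.{u} (max η (1 / 2 - 1 / 600 - n * δ)) := by
    induction n with
    | zero => exact reductionProperty_base.mono (by simp)
    | succ n ih =>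
      set β := max η (1 / 2 - 1 / 600 - n * δ) with hβ
      rcases le_total (1 / 2 - 1 / 600) η with hη' | hη'
      · exact reductionProperty_base.mono (hη'.trans (le_max_left _ _))
      have hηβ : η ≤ β := le_max_left _ _
      have hβ' : β ≤ 1 / 2 - 1 / 600 := max_le hη' (sub_le_self _ (by positivity))
      have hgain : δ ≤ bootstrapGain β / 4 := by
        have : η ^ 2 * (1 / 300) ≤ β ^ 2 * (1 - 2 * β) := by gcongr; linarith
        rw [hδ, bootstrapGain]
        linarith
      refine (ih.sub_bootstrapGain (hη.trans_le hηβ) (by linarith)).mono ?_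
      rcases max_choice η (1 / 2 - 1 / 600 - n * δ) with h | h
      · exact le_max_of_le_left (by linarith [sq_nonneg η])
      · exact le_max_of_le_right (by push_cast; linarith)
  obtain ⟨n, hn⟩ := exists_nat_ge (1 / δ)
  rw [div_le_iff₀ (by positivity)] at hn
  exact (hiterate n).mono (max_le le_rfl (by linarith))

end Iteration

section IndependentSums

variable {G H F : Type*} [AddCommGroup G] [Finite G] [AddCommGroup H] [Finite H]
  [FunLike F G H] [AddMonoidHomClass F G H]

omit [AddCommGroup G] in
lemma isDist_pi {ι : Type*} [Fintype ι] {p : ι → G → ℝ} (hp : ∀ i, IsDist (p i)) :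
    IsDist fun x : ι → G => ∏ i, p i (x i) := by
  classical
  have := Fintype.ofFinite G
  refine ⟨fun x => Finset.prod_nonneg fun i _ => (hp i).1 _, ?_⟩
  rw [finsum_eq_sum_of_fintype, ← Fintype.prod_sum]
  exact Finset.prod_eq_one fun i _ => (hp i).sum_eq_one

lemma isDist_indepSum {k : ℕ} {p : Fin k → G → ℝ} (hp : ∀ i, IsDist (p i)) :
    IsDist (indepSum k p) :=
  (isDist_pi hp).push _

lemma ent_indepSum_zero (p : Fin 0 → G → ℝ) : ent (indepSum 0 p) = 0 :=
  (isDist_pi fun i => i.elim0).ent_push_eq_zero fun _ _ => Finset.sum_of_isEmpty _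

lemma indepSum_succ {k : ℕ} (p : Fin (k + 1) → G → ℝ) :
    indepSum (k + 1) p = conv (p 0) (indepSum k fun i => p i.succ) := by
  have hcons : prodDist (p 0) (fun x : Fin k → G => ∏ i, p i.succ (x i)) =
      push (Fin.consEquiv fun _ : Fin (k + 1) => G).symm fun x => ∏ i, p i (x i) := by
    rw [push_equiv]
    funext z
    simp [prodDist, Fin.prod_univ_succ]
  have hmap := push_prodMap id (fun x : Fin k → G => ∑ i, x i) (p 0)
    (fun x => ∏ i, p i.succ (x i))
  rw [push_id] at hmap
  rw [conv_eq_push, indepSum, indepSum, ← hmap, hcons, push_push, push_push]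
  congr 1
  funext x
  simp [Fin.sum_univ_succ, Fin.tail]

lemma push_indepSum (φ : F) {k : ℕ} (p : Fin k → G → ℝ) :
    push φ (indepSum k p) = indepSum k fun i => push φ (p i) := by
  induction k with
  | zero =>
    rw [indepSum, push_push]
    funext b
    simp only [indepSum, push, finsum_unique]
    simp
  | succ k ih =>
    rw [indepSum_succ, push_conv, ih, indepSum_succ]

variable {p : G → ℝ}

lemma IsDist.ent_indepSum_le (hp : IsDist p) (k : ℕ) : ent (indepSum k fun _ => p) ≤ k * ent p := by
  induction k with
  | zero => rw [ent_indepSum_zero, Nat.cast_zero, zero_mul]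
  | succ k ih =>
    rw [indepSum_succ]
    push_cast
    linarith [ent_conv_le hp (isDist_indepSum fun _ : Fin k => hp)]

lemma IsDist.ent_add_ent_indepSum_le (hp : IsDist p) {j k : ℕ} (hjk : j < k) :
    ent p + ent (indepSum j fun _ => p) ≤ k * ent p := by
  have hcast : ((j + 1 : ℕ) : ℝ) * ent p ≤ k * ent p :=
    mul_le_mul_of_nonneg_right (Nat.cast_le.2 hjk) hp.ent_nonneg
  push_cast at hcast
  linarith [hp.ent_indepSum_le j]

lemma le_ent_indepSum {δ : ℝ} {k : ℕ}
    (h : ∀ j < k, sDouble p (indepSum j fun _ => p) ≤ δ) :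
    k * (ent p - δ) ≤ ent (indepSum k fun _ => p) := by
  induction k with
  | zero => rw [ent_indepSum_zero, Nat.cast_zero, zero_mul]
  | succ k ih =>
    have hk := h k k.lt_succ_self
    rw [sDouble] at hk
    rw [indepSum_succ]
    push_cast
    linarith [ih fun j hj => h j (hj.trans k.lt_succ_self)]

lemma ent_unifOn {A : Type*} [Finite A] {S : Set A} (hS : S.Nonempty) :
    ent (unifOn S) = log (Nat.card S) := by
  have hlog (a : A) : negMulLog (unifOn S a) =
      S.indicator (fun _ => (Nat.card S : ℝ)⁻¹ * log (Nat.card S)) a := by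
    by_cases ha : a ∈ S <;> simp [unifOn, ha, negMulLog]
  have hcard : (Nat.card S : ℝ) ≠ 0 := by
    have := hS.to_subtype
    exact Nat.cast_ne_zero.2 Nat.card_pos.ne'
  have := Fintype.ofFinite S
  simp only [ent, hlog]
  rw [← finsum_mem_def, ← finsum_set_coe_eq_finsum_mem, finsum_eq_sum_of_fintype, Finset.sum_const,
    nsmul_eq_mul, Finset.card_univ, ← Nat.card_eq_fintype_card, mul_inv_cancel_left₀ hcard]

end IndependentSums

section Conclusion

universe u

variable {η ε M : ℝ}

lemma ReductionProperty.exists_submodule_forall_sDouble_le {ι : Type*} [Finite ι]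
    (h : ReductionProperty.{u} η) (hη : 0 ≤ η) (hε : 0 < ε) (hM : 0 ≤ M) : ∃ L : ℝ, 0 ≤ L ∧
      ∀ ⦃G : Type u⦄ [AddCommGroup G] [Module (ZMod 2) G] [Finite G] ⦃p : G → ℝ⦄
        ⦃q : ι → G → ℝ⦄, IsDist p → (∀ i, IsDist (q i)) →
        (∀ i, ent p + ent (q i) ≤ M * ent p) →
        ∃ V : Submodule (ZMod 2) G, log (Nat.card V) ≤ L * ent p ∧
          (ent (push V.mkQ p) ≤ ε * ent p ∨ ∀ i, sDouble (push V.mkQ p) (push V.mkQ (q i)) ≤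
            η * (ent (push V.mkQ p) + ent (push V.mkQ (q i)))) := by
  obtain ⟨L, c, hL, hc, hred⟩ := h
  have := Fintype.ofFinite ι
  obtain ⟨N, hN⟩ := exists_nat_ge (Fintype.card ι * M / (c * ε))
  refine ⟨N * (L * M), by positivity, fun G _ _ _ p q hp hq hpq => ?_⟩
  have hle (V : Submodule (ZMod 2) G) (i : ι) :
      ent (push V.mkQ p) + ent (push V.mkQ (q i)) ≤ M * ent p :=
    (add_le_add (ent_push_le hp.1 _) (ent_push_le (hq i).1 _)).trans (hpq i)
  have hnonneg (V : Submodule (ZMod 2) G) (i : ι) :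
      0 ≤ ent (push V.mkQ p) + ent (push V.mkQ (q i)) :=
    add_nonneg (hp.push _).ent_nonneg ((hq i).push _).ent_nonneg
  have hp_nonneg := hp.ent_nonneg
  rw [mul_assoc]
  refine exists_submodule_of_decrement (δ := c * (ε * ent p))
    (Φ := fun V => ∑ i, (ent (push V.mkQ p) + ent (push V.mkQ (q i)))) (by positivity) ?_ ?_ ?_
  · rw [div_le_iff₀ (by positivity)] at hN
    have hsum := Finset.sum_le_card_nsmul Finset.univ _ _ fun i _ => hle ⊥ i
    rw [nsmul_eq_mul, Finset.card_univ] at hsum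
    linarith [mul_le_mul_of_nonneg_right hN hp_nonneg]
  · refine fun V hΦ => Or.inr fun i => ?_
    have hi := (Finset.single_le_sum (fun i _ => hnonneg V i) (Finset.mem_univ i)).trans hΦ
    linarith [mul_nonneg hη (hnonneg V i), ((hq i).push V.mkQ).ent_nonneg,
      sDouble_le_left (hp.push V.mkQ) ((hq i).push V.mkQ)]
  · intro V hV
    push Not at hV
    obtain ⟨hpV, i, hi⟩ := hV
    obtain ⟨W, hW, hdrop⟩ := hred (hp.push V.mkQ) ((hq i).push V.mkQ) hi.le
    refine ⟨W.comap V.mkQ, ?_, ?_⟩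
    · linarith [log_card_comap_mkQ_le V W, mul_le_mul_of_nonneg_left (hle V i) hL]
    · have hsingle := Finset.single_le_sum (fun j _ => sub_nonneg.2 (add_le_add
        (ent_push_le (hp.push V.mkQ).1 W.mkQ) (ent_push_le ((hq j).push V.mkQ).1 W.mkQ)))
        (Finset.mem_univ i)
      rw [Finset.sum_sub_distrib] at hsingle
      simp only [ent_push_mkQ_comap V W hp, ent_push_mkQ_comap V W (hq _)]
      have hsum : ε * ent p ≤ ent (push V.mkQ p) + ent (push V.mkQ (q i)) :=
        hpV.le.trans (le_add_of_nonneg_right ((hq i).push V.mkQ).ent_nonneg)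
      linarith [mul_le_mul_of_nonneg_left hsum hc.le]

theorem statement5_general (k : ℕ) {ε : ℝ} (hε : 0 < ε) : ∃ L : ℝ, 0 < L ∧
    ∀ (G : Type u) [AddCommGroup G] [Module (ZMod 2) G] [Finite G] (p : G → ℝ), IsDist p →
      ∃ V : Submodule (ZMod 2) G,
        ent (unifOn (V : Set G)) ≤ L * ent p ∧
        (ent (push V.mkQ p) ≤ ε * ent p ∨
          ent (indepSum k fun _ => push V.mkQ p) ≥ ((k : ℝ) - ε) * ent (push V.mkQ p)) := by
  have hη : 0 < ε / (k ^ 2 + 1) := by positivity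
  obtain ⟨L, hL, hregular⟩ := (reductionProperty_of_pos hη).exists_submodule_forall_sDouble_le
    (ι := Fin k) hη.le hε k.cast_nonneg
  refine ⟨L + 1, by positivity, fun G _ _ _ p hp => ?_⟩
  obtain ⟨V, hV, hVp⟩ := hregular hp (fun j => isDist_indepSum fun _ : Fin j => hp)
    fun j => hp.ent_add_ent_indepSum_le j.2
  refine ⟨V, ?_, hVp.imp_right fun hs => ?_⟩
  · rw [ent_unifOn ⟨0, V.zero_mem⟩, SetLike.coe_sort_coe]
    linarith [hp.ent_nonneg]
  replace hp := hp.push V.mkQ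
  refine le_trans ?_ (le_ent_indepSum (δ := ε / (k ^ 2 + 1) * (k * ent (push V.mkQ p)))
    fun j hj => ?_)
  · have : k * (ε / (k ^ 2 + 1) * (k * ent (push V.mkQ p))) ≤ ε * ent (push V.mkQ p) := by
      field_simp
      linarith [hp.ent_nonneg]
    linarith
  · have hsj := hs ⟨j, hj⟩
    rw [push_indepSum] at hsj
    exact hsj.trans (mul_le_mul_of_nonneg_left (hp.ent_add_ent_indepSum_le hj) hη.le)

end Conclusion

/-- For every `k ≥ 2` and `ε > 0` there is `L > 0` such that for any finitely
supported `X` on `𝔽₂ⁿ` there is a subspace `V` with `H[𝐔_V] ≤ L·H[X]` such that, writing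
`X̃ = π_V(X)`, either `H[X̃] ≤ ε H[X]`, or `X̃` is `(k, ε)`-dissociated:
`H[X̃₁ + ⋯ + X̃_k] ≥ (k − ε) H[X̃]`. -/
theorem statement5 :
    ∀ k : ℕ, 2 ≤ k → ∀ ε : ℝ, 0 < ε → ∃ L : ℝ, 0 < L ∧
      ∀ (n : ℕ) (p : Fvec n → ℝ), IsDist p →
        ∃ V : Submodule (ZMod 2) (Fvec n),
          ent (unifOn (V : Set (Fvec n))) ≤ L * ent p ∧
          (ent (push V.mkQ p) ≤ ε * ent p ∨
            ent (indepSum k fun _ => push V.mkQ p) ≥ ((k : ℝ) - ε) * ent (push V.mkQ p)) := by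
  intro k _ ε hε
  obtain ⟨L, hL, h⟩ := statement5_general.{0} k hε
  exact ⟨L, hL, fun n p hp => h (Fvec n) p hp⟩
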